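/- Let n ≥ 2 and a = (a_1,…,a_n) ∈ ℂ^n with each a_j purely imaginary, let σ ∈ ℂ with Re(σ) > 0, and let p_1,…,p_{n−1} ∈ ℂ with Re(p_j) > 0 for all j; set p_0 := 0. Then U_{n,a}(p_1,…,p_{n−1}) = [Γ_ℝ(p_{n−1}+σ+|a|) / ∏_{j=1}^{n} Γ_ℝ(σ+a_j)] · (1/(4πi)^{n−1})·∫_{q_1,…,q_{n−1}} U_{n,a}(q_1,…,q_{n−1})·∏_{j=1}^{n−1} Γ_ℝ(p_j−q_j)·Γ_ℝ(p_{j−1}−q_j+σ) dq_1⋯dq_{n−1}. -/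

import Mathlib

open MeasureTheory Complex

noncomputable section

/-- `Γ_ℝ(s) = π^{-s/2} Γ(s/2)`. -/
def GammaR (s : ℂ) : ℂ := (Real.pi : ℂ) ^ (-s / 2) * Complex.Gamma (s / 2)

/-- Modified Bessel function of the second kind, via its integral representation. -/
def BesselK (ν : ℂ) (y : ℝ) : ℂ :=
  (1 / 2) * ∫ t in Set.Ioi (0 : ℝ),
    Complex.exp (-((y : ℂ) / 2) * ((t : ℂ) + 1 / (t : ℂ))) * (t : ℂ) ^ ν / (t : ℂ)

/-- Extend a finite real tuple to `ℕ`, defaulting to `1`. -/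
def extR {k : ℕ} (t : Fin k → ℝ) : ℕ → ℝ := fun i => if h : i < k then t ⟨i, h⟩ else 1

/-- Extend a finite real tuple to `ℕ`, defaulting to `0`. -/
def extR0 {k : ℕ} (t : Fin k → ℝ) : ℕ → ℝ := fun i => if h : i < k then t ⟨i, h⟩ else 0

/-- The positive orthant. -/
def posSet (k : ℕ) : Set (Fin k → ℝ) := {t | ∀ j, 0 < t j}

/-- `|a| = a_1 + ⋯ + a_n` (0-based indexing). -/
def sumA (n : ℕ) (a : ℕ → ℂ) : ℂ := ∑ j ∈ Finset.range n, a j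

/-- `ã_j = a_{j+1} + a_1/(n-1)` (0-based indexing). -/
def tildeA (n : ℕ) (a : ℕ → ℂ) : ℕ → ℂ := fun j => a (j + 1) + a 0 / ((n : ℂ) - 1)

/-- The normalized radial part `Ŵ^A_{n,a}` of the class one `GL_n(ℝ)` Whittaker function,
as a function of `(y_1,…,y_{n-1})` (0-based indexing). -/
def WhittAr : ℕ → (ℕ → ℂ) → (ℕ → ℝ) → ℂ
  | 0, _, _ => 1
  | 1, _, _ => 1
  | 2, a, y => 2 * ((y 0 : ℂ) ^ ((a 0 + a 1) / 2)) *
      BesselK ((a 0 - a 1) / 2) (2 * Real.pi * y 0)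
  | (n + 3), a, y =>
      ∫ t in posSet (n + 2),
        WhittAr (n + 2) (tildeA (n + 3) a)
            (fun j => y (j + 1) * Real.sqrt (extR t (j + 1) / extR t j)) *
          (∏ j ∈ Finset.range (n + 2),
            Complex.exp (((-(Real.pi * y j) ^ 2 * extR t j - 1 / extR t j : ℝ) : ℂ)) *
              ((Real.pi * y j : ℝ) : ℂ) ^ ((((n + 2 - j : ℕ) : ℂ) * a 0) / ((n + 2 : ℕ) : ℂ)) *
              ((extR t j : ℝ) : ℂ) ^ ((((n + 3 : ℕ) : ℂ) * a 0) / (2 * ((n + 2 : ℕ) : ℂ)))) *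
          ((Real.pi * extR t (n + 1) : ℝ) : ℂ) ^ (-(sumA (n + 3) a) / 2) *
          (∏ j ∈ Finset.range (n + 2), ((extR t j : ℝ) : ℂ))⁻¹

/-- `Ŵ^A_{n,a}` as a function of the full tuple `(y_1,…,y_n)`. -/
def WhittAhat (n : ℕ) (a : ℕ → ℂ) (y : ℕ → ℝ) : ℂ :=
  ((y (n - 1) : ℝ) : ℂ) ^ sumA n a * WhittAr n a y

/-- The Mellin transform `U_{n,a}` (0-based: `s j` stands for `s_{j+1}`). -/
def Ufun (n : ℕ) (a : ℕ → ℂ) (s : ℕ → ℂ) : ℂ :=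
  ∫ y in posSet (n - 1),
    WhittAr n a (extR y) *
      ∏ j ∈ Finset.range (n - 1), ((extR y j : ℝ) : ℂ) ^ s j / ((extR y j : ℝ) : ℂ)

/-- The normalized radial part `Ŵ^B_{n,b}` of the class one `SO_{2n+1}(ℝ)` Whittaker function. -/
def WhittBr : ℕ → (ℕ → ℂ) → (ℕ → ℝ) → ℂ
  | 0, _, _ => 1
  | 1, b, y => 2 * BesselK (b 0 / 2) (2 * Real.pi * y 0)
  | (n + 2), b, y =>
      ∫ p in (posSet (n + 2) ×ˢ posSet (n + 1)),
        WhittBr (n + 1) b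
            (fun j =>
              if j < n then
                y (j + 1) *
                  Real.sqrt (extR p.1 (j + 1) * extR p.2 (j + 1) /
                    (extR p.1 (j + 2) * extR p.2 j))
              else y (n + 1) * Real.sqrt (extR p.1 (n + 1) / extR p.2 n)) *
          (∏ j ∈ Finset.range (n + 2),
            Complex.exp (((-(Real.pi * y j) ^ 2 * extR p.1 j - 1 / extR p.1 j : ℝ) : ℂ)) *
              ((Real.pi * y j : ℝ) : ℂ) ^ b (n + 1)) *
          (∏ j ∈ Finset.range (n + 1),
            Complex.exp (((-(Real.pi * y j) ^ 2 * (extR p.1 j / extR p.1 (j + 1)) * extR p.2 j -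
                  1 / extR p.2 j : ℝ) : ℂ)) *
              ((extR p.1 (j + 1) * extR p.2 j : ℝ) : ℂ) ^ (b (n + 1) / 2)) *
          ((extR p.1 0 : ℝ) : ℂ) ^ b (n + 1) *
          (∏ j ∈ Finset.range (n + 1), ((extR p.2 j : ℝ) : ℂ))⁻¹ *
          (∏ j ∈ Finset.range (n + 2), ((extR p.1 j : ℝ) : ℂ))⁻¹

/-- The Mellin transform `V_{n,b}` (0-based: `s j` stands for `s_{j+1}`). -/
def Vfun (n : ℕ) (b : ℕ → ℂ) (s : ℕ → ℂ) : ℂ :=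
  ∫ y in posSet n,
    WhittBr n b (extR y) *
      ∏ j ∈ Finset.range n, ((extR y j : ℝ) : ℂ) ^ s j / ((extR y j : ℝ) : ℂ)

/-- Integral over the vertical line `Re z = c`, i.e. `i·∫_ℝ f(c+it) dt`. -/
def VInt (c : ℝ) (f : ℂ → ℂ) : ℂ := Complex.I * ∫ t : ℝ, f (c + t * Complex.I)

/-- Iterated integral over `k` vertical lines with abscissas `c 0, …, c (k-1)`;
the integrand is fed the contour points as a 0-based sequence. -/
def VIntK (k : ℕ) (c : ℕ → ℝ) (f : (ℕ → ℂ) → ℂ) : ℂ :=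
  Complex.I ^ k * ∫ t : Fin k → ℝ, f (fun i => (c i : ℂ) + (extR0 t i : ℝ) * Complex.I)



/-- The extension of `p_1,…,p_{n-1}` by the convention `p_0 = 0` (1-based indexing). -/
def Pext (p : ℕ → ℂ) : ℕ → ℂ := fun i => if i = 0 then 0 else p (i - 1)

/-!
In the logarithmic coordinates `y = e^x` the function `Ufun` is a multidimensional Laplace
transform, and the recursion defining the Whittaker function is a convolution of twisted Gaussians
with a sheared copy of the Whittaker function of lower rank. Parseval's formula turns this into an
integral recursion for `Ufun` whose kernel `recKernel` is a product of Gamma factors.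

Up to normalization the kernel of the identity is `reproKernel`. Barnes' first lemma, applied in
each variable, evaluates both `∫ reproKernel(p, ω) recKernel(ω, u) dω` and
`∫ recKernel(p, η) reproKernel(η, u) dη` as multiples of the same function `kernelValue(p, u)`, so
the identity for `n` variables reduces to the identity for `n - 1`. Barnes' first lemma is in turn
Parseval's formula for two Euler Beta kernels.
-/

open scoped Real

/-! ### Gamma factors as Laplace transforms -/

/-- The two-sided Laplace transform of a function on the line. -/
def laplace (h : ℝ → ℂ) (s : ℂ) : ℂ := ∫ x, h x * cexp (s * x)

lemma integral_Ioi_eq_integral_exp (F : ℝ → ℂ) :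
    ∫ t in Set.Ioi (0 : ℝ), F t = ∫ x : ℝ, Real.exp x • F (Real.exp x) := by
  have h := integral_image_eq_integral_abs_deriv_smul (s := Set.univ) (f := Real.exp)
    (f' := Real.exp) MeasurableSet.univ (fun x _ => (Real.hasDerivAt_exp x).hasDerivWithinAt)
    Real.exp_injective.injOn F
  simpa [Set.image_univ, Real.range_exp] using h

lemma integrableOn_Ioi_iff_integrable_exp (F : ℝ → ℂ) :
    IntegrableOn F (Set.Ioi (0 : ℝ)) ↔ Integrable fun x : ℝ => Real.exp x • F (Real.exp x) := by
  have h := integrableOn_image_iff_integrableOn_abs_deriv_smul (s := Set.univ) (f := Real.exp)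
    (f' := Real.exp) MeasurableSet.univ (fun x _ => (Real.hasDerivAt_exp x).hasDerivWithinAt)
    Real.exp_injective.injOn F
  simpa [Set.image_univ, Real.range_exp] using h

lemma ofReal_exp_cpow (x : ℝ) (s : ℂ) : (Real.exp x : ℂ) ^ s = cexp (s * x) := by
  rw [cpow_def_of_ne_zero (ofReal_ne_zero.2 (Real.exp_pos x).ne'),
    ← ofReal_log (Real.exp_pos x).le, Real.log_exp, mul_comm]

lemma exp_smul_exp_cpow_sub_one_smul (x : ℝ) (s z : ℂ) :
    Real.exp x • (Real.exp x : ℂ) ^ (s - 1) • z = z * cexp (s * x) := by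
  rw [ofReal_exp_cpow, real_smul, smul_eq_mul, ofReal_exp, ← mul_assoc, ← Complex.exp_add,
    mul_comm]
  congr 2; ring

lemma mellin_eq_laplace (f : ℝ → ℂ) (s : ℂ) :
    mellin f s = laplace (fun x => f (Real.exp x)) s := by
  simp only [mellin, laplace, integral_Ioi_eq_integral_exp, exp_smul_exp_cpow_sub_one_smul]

lemma mellinConvergent_iff_integrable_exp (f : ℝ → ℂ) (s : ℂ) :
    MellinConvergent f s ↔ Integrable fun x : ℝ => f (Real.exp x) * cexp (s * x) := by
  simp only [MellinConvergent, integrableOn_Ioi_iff_integrable_exp,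
    exp_smul_exp_cpow_sub_one_smul]

lemma integral_laplace_neg_mul_cexp {h : ℝ → ℂ} (hc : Continuous h) {d : ℝ}
    (hi : Integrable fun x : ℝ => h x * cexp (-d * x))
    (hL : Integrable fun t : ℝ => laplace h (-(d + t * I))) (x : ℝ) :
    ∫ t : ℝ, laplace h (-(d + t * I)) * cexp ((d + t * I) * x) = 2 * π * h x := by
  have hmellin (s : ℂ) : mellin (fun y => h (Real.log y)) s = laplace h s := by
    simp only [mellin_eq_laplace, Real.log_exp]
  have hneg (t : ℝ) : -((d : ℂ) + t * I) = (-d : ℝ) + (-t : ℝ) * I := by push_cast; ring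
  have hvert : VerticalIntegrable (mellin fun y => h (Real.log y)) (-d) volume := by
    simpa only [VerticalIntegrable, hmellin, hneg, neg_neg] using hL.comp_neg
  have hinv := mellinInv_mellin_eq (-d) (fun y => h (Real.log y)) (Real.exp_pos x)
    (by simpa only [mellinConvergent_iff_integrable_exp, Real.log_exp, ofReal_neg] using hi)
    hvert (hc.continuousAt.comp (Real.continuousAt_log (Real.exp_pos x).ne'))
  simp only [mellinInv, hmellin, ofReal_exp_cpow, Real.log_exp, smul_eq_mul] at hinv
  rw [← integral_neg_eq_self, real_smul] at hinv
  simp only [← hneg, neg_neg] at hinv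
  rw [← hinv, ← mul_assoc]
  push_cast
  rw [mul_one_div_cancel (by simp [Real.pi_ne_zero]), one_mul]
  simp only [mul_comm]

/-- The twisted Gaussian `e^{s x} exp(-π e^{2x})`, i.e. `y^s exp(-π y²)` at `y = e^x`. -/
def gaussTwist (s : ℂ) (x : ℝ) : ℂ := Real.exp (-(π * Real.exp (2 * x))) * cexp (s * x)

lemma continuous_gaussTwist (s : ℂ) : Continuous (gaussTwist s) := by
  unfold gaussTwist; fun_prop

lemma gaussTwist_mul_cexp (s t : ℂ) (x : ℝ) :
    gaussTwist s x * cexp (t * x) = gaussTwist (s + t) x := by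
  simp only [gaussTwist, add_mul, Complex.exp_add, mul_assoc]

lemma norm_gaussTwist (s : ℂ) (x : ℝ) :
    ‖gaussTwist s x‖ = Real.exp (-(π * Real.exp (2 * x)) + s.re * x) := by
  rw [gaussTwist, norm_mul, norm_real, Complex.norm_exp, re_mul_ofReal, Real.exp_add,
    Real.norm_of_nonneg (Real.exp_pos _).le]

lemma hasMellin_exp_neg_pi_mul_sq {s : ℂ} (hs : 0 < s.re) :
    HasMellin (fun y : ℝ => cexp (-(π * y ^ 2))) s (Gammaℝ s / 2) := by
  have hs2 : 0 < (s / 2).re := by simpa using hs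
  have hconv : MellinConvergent (fun y : ℝ => cexp (-y)) (s / 2) := by
    simpa [MellinConvergent, mul_comm] using GammaIntegral_convergent hs2
  have hsq (y : ℝ) : cexp (-(π * y ^ 2)) = cexp (-(π * y ^ (2 : ℝ) : ℝ)) := by
    rw [Real.rpow_two]; push_cast; rfl
  simp only [hsq]
  refine ⟨(MellinConvergent.comp_rpow (f := fun y : ℝ => cexp (-(π * y : ℝ))) two_ne_zero).2
    (by simpa using (MellinConvergent.comp_mul_left (f := fun y : ℝ => cexp (-y))
      Real.pi_pos).2 hconv), ?_⟩
  rw [mellin_comp_rpow (fun y : ℝ => cexp (-(π * y : ℝ))) s 2,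
    mellin_comp_mul_left (fun y : ℝ => cexp (-y)) _ Real.pi_pos, Gammaℝ_def,
    Gamma_eq_integral (s := s / 2) hs2, GammaIntegral_eq_mellin]
  simp only [ofReal_ofNat, Nat.abs_ofNat, real_smul, smul_eq_mul, ofReal_inv, neg_div, ofReal_exp,
    ofReal_neg]
  ring

lemma exp_neg_pi_mul_exp_sq_mul_cexp (s : ℂ) (x : ℝ) :
    cexp (-(π * (Real.exp x : ℂ) ^ 2)) * cexp (s * x) = gaussTwist s x := by
  rw [gaussTwist, two_mul, Real.exp_add]
  push_cast
  rw [sq]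

lemma integrable_gaussTwist {s : ℂ} (hs : 0 < s.re) : Integrable (gaussTwist s) := by
  have h := (mellinConvergent_iff_integrable_exp _ s).1 (hasMellin_exp_neg_pi_mul_sq hs).1
  simpa only [exp_neg_pi_mul_exp_sq_mul_cexp] using h

lemma integral_gaussTwist {s : ℂ} (hs : 0 < s.re) : ∫ x, gaussTwist s x = Gammaℝ s / 2 := by
  rw [← (hasMellin_exp_neg_pi_mul_sq hs).2, mellin_eq_laplace]
  simp only [laplace, exp_neg_pi_mul_exp_sq_mul_cexp]

lemma norm_gaussTwist_le {s : ℂ} (hs : 0 < s.re) (x : ℝ) :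
    ‖gaussTwist s x‖ ≤ Real.exp (s.re ^ 2) := by
  rw [norm_gaussTwist, Real.exp_le_exp]
  have hπ : Real.exp (2 * x) ≤ π * Real.exp (2 * x) :=
    le_mul_of_one_le_left (Real.exp_pos _).le (by linarith [Real.pi_gt_three])
  rcases le_total x 0 with hx | hx
  · nlinarith [Real.exp_pos (2 * x)]
  · have hquad : (2 * x) ^ 2 / 2 ≤ Real.exp (2 * x) := by
      linarith [Real.quadratic_le_exp_of_nonneg (by linarith : (0 : ℝ) ≤ 2 * x)]
    nlinarith [sq_nonneg (s.re - x), sq_nonneg s.re]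

lemma norm_Gammaℝ_le {s : ℂ} (hs : 0 < s.re) : ‖Gammaℝ s‖ ≤ ‖Gammaℝ s.re‖ := by
  have hnorm (x : ℝ) : gaussTwist s.re x = (‖gaussTwist s x‖ : ℝ) := by
    rw [norm_gaussTwist, gaussTwist, Real.exp_add]
    push_cast; rfl
  have hs' : Gammaℝ s = 2 * ∫ x, gaussTwist s x := by
    rw [integral_gaussTwist hs]; ring
  have hre' : Gammaℝ s.re = (2 * ∫ x, ‖gaussTwist s x‖ : ℝ) := by
    rw [ofReal_mul, ← integral_complex_ofReal, ← integral_congr_ae (.of_forall hnorm),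
      integral_gaussTwist (by simpa using hs)]
    push_cast; ring
  rw [hs', hre', norm_mul, norm_real, Real.norm_of_nonneg (by positivity), norm_ofNat]
  gcongr
  exact norm_integral_le_integral_norm _

lemma continuousAt_Gammaℝ {s : ℂ} (hs : 0 < s.re) : ContinuousAt Gammaℝ s := by
  have hinv : ContinuousAt (fun z => (Gammaℝ z)⁻¹) s :=
    differentiable_Gammaℝ_inv.continuous.continuousAt
  simpa only [Pi.inv_def, inv_inv] using hinv.inv₀ (inv_ne_zero (Gammaℝ_ne_zero_of_re_pos hs))

lemma continuous_Gammaℝ_comp {X : Type*} [TopologicalSpace X] {f : X → ℂ} (hf : Continuous f)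
    (h : ∀ x, 0 < (f x).re) : Continuous fun x => Gammaℝ (f x) :=
  continuous_iff_continuousAt.2 fun x => (continuousAt_Gammaℝ (h x)).comp hf.continuousAt

lemma memLp_top_Gammaℝ_comp {X : Type*} [TopologicalSpace X] [MeasurableSpace X]
    [OpensMeasurableSpace X] {μ : Measure X} {f : X → ℂ} (hf : Continuous f) {c : ℝ} (hc : 0 < c)
    (hre : ∀ x, (f x).re = c) : MemLp (fun x => Gammaℝ (f x)) ⊤ μ :=
  memLp_top_of_bound (continuous_Gammaℝ_comp hf fun x => (hre x).symm ▸ hc).aestronglyMeasurable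
    ‖Gammaℝ c‖ (.of_forall fun x => (hre x) ▸ norm_Gammaℝ_le ((hre x).symm ▸ hc))

lemma norm_Gammaℝ_mul_sq_le {s : ℂ} (hs : 0 < s.re) :
    ‖Gammaℝ s‖ * ‖s‖ ^ 2 ≤ (2 * π) ^ 2 * ‖Gammaℝ (s.re + 4 : ℝ)‖ := by
  have hs0 : s ≠ 0 := ne_zero_of_re_pos hs
  have hs2 : s + 2 ≠ 0 := ne_zero_of_re_pos (by rw [add_re, re_ofNat]; linarith)
  have hfour : Gammaℝ (s + 4) = Gammaℝ s * s / 2 / π * (s + 2) / 2 / π := by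
    rw [← Gammaℝ_add_two hs0, ← Gammaℝ_add_two hs2]; congr 1; ring
  have hle : ‖s‖ ≤ ‖s + 2‖ := by
    rw [← sq_le_sq₀ (norm_nonneg _) (norm_nonneg _), Complex.sq_norm, Complex.sq_norm]
    simp only [normSq_apply, add_re, add_im, re_ofNat, im_ofNat]
    nlinarith
  calc ‖Gammaℝ s‖ * ‖s‖ ^ 2 ≤ ‖Gammaℝ s‖ * (‖s‖ * ‖s + 2‖) := by rw [sq]; gcongr
    _ = (2 * π) ^ 2 * ‖Gammaℝ (s + 4)‖ := by
      rw [hfour]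
      simp only [Complex.norm_div, Complex.norm_mul, norm_ofNat, norm_real, Real.norm_eq_abs,
        abs_of_pos Real.pi_pos]
      field_simp
    _ ≤ (2 * π) ^ 2 * ‖Gammaℝ (s.re + 4 : ℝ)‖ := by
      gcongr
      simpa using norm_Gammaℝ_le (s := s + 4) (by simp; linarith)

lemma integrable_Gammaℝ_vertical {s : ℂ} (hs : 0 < s.re) :
    Integrable fun t : ℝ => Gammaℝ (s + t * I) := by
  have hre (t : ℝ) : (s + t * I).re = s.re := by simp
  have hsq (t : ℝ) : ‖s + t * I‖ ^ 2 = s.re ^ 2 * (1 + ((t + s.im) / s.re) ^ 2) := by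
    rw [Complex.sq_norm, normSq_apply]
    simp only [add_re, add_im, mul_re, mul_im, ofReal_re, ofReal_im, I_re, I_im, mul_zero, mul_one,
      sub_self, add_zero]
    field_simp
    ring
  have hdom : Integrable fun t : ℝ => (1 + ((t + s.im) / s.re) ^ 2)⁻¹ :=
    (integrable_inv_one_add_sq.comp_div hs.ne').comp_add_right s.im
  refine (hdom.const_mul ((2 * π) ^ 2 * ‖Gammaℝ (s.re + 4 : ℝ)‖ / s.re ^ 2)).mono'
    (continuous_Gammaℝ_comp (by fun_prop) fun t => by simpa using hs).aestronglyMeasurable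
    (.of_forall fun t => ?_)
  have hbound := norm_Gammaℝ_mul_sq_le (s := s + t * I) (by simpa using hs)
  rw [hre, hsq, ← mul_assoc, ← le_div_iff₀ (by positivity)] at hbound
  calc ‖Gammaℝ (s + t * I)‖ ≤ _ := le_div_iff₀ (by positivity) |>.2 hbound
    _ = _ := by ring

/-- `log √(1 + e^{2z})`, the logarithmic coordinate of `√(1 + y²)`. -/
def logSqrtOneAddExp (z : ℝ) : ℝ := Real.log (1 + Real.exp (2 * z)) / 2

lemma continuous_logSqrtOneAddExp : Continuous logSqrtOneAddExp :=
  (Continuous.log (by fun_prop) fun z => by positivity).div_const 2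

lemma exp_two_mul_add_logSqrtOneAddExp (y z : ℝ) :
    Real.exp (2 * (y + logSqrtOneAddExp z)) = Real.exp (2 * (z + y)) + Real.exp (2 * y) := by
  rw [logSqrtOneAddExp, mul_add, Real.exp_add, mul_div_cancel₀ _ two_ne_zero,
    Real.exp_log (by positivity), mul_add 2 z y, Real.exp_add (2 * z)]
  ring

/-- The integrand `y^u (1 + y²)^{-(u+v)/2}` of Euler's Beta integral at `y = e^z`. -/
def betaKernel (u v : ℂ) (z : ℝ) : ℂ := cexp (u * z - (u + v) * logSqrtOneAddExp z)

lemma continuous_betaKernel (u v : ℂ) : Continuous (betaKernel u v) := by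
  have := continuous_logSqrtOneAddExp
  unfold betaKernel
  fun_prop

lemma betaKernel_mul_cexp (u v s : ℂ) (z : ℝ) :
    betaKernel u v z * cexp (s * z) = betaKernel (u + s) (v - s) z := by
  simp only [betaKernel, ← Complex.exp_add]; congr 1; ring

lemma betaKernel_mul_betaKernel (u v u' v' : ℂ) (z : ℝ) :
    betaKernel u v z * betaKernel u' v' z = betaKernel (u + u') (v + v') z := by
  simp only [betaKernel, ← Complex.exp_add]; congr 1; ring

lemma gaussTwist_add_mul_gaussTwist (u v : ℂ) (y z : ℝ) :
    gaussTwist u (z + y) * gaussTwist v y =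
      betaKernel u v z * gaussTwist (u + v) (y + logSqrtOneAddExp z) := by
  simp only [gaussTwist, betaKernel, exp_two_mul_add_logSqrtOneAddExp, ofReal_exp,
    ← Complex.exp_add]
  congr 1; push_cast; ring

lemma integrable_gaussTwist_add_mul_gaussTwist {u v : ℂ} (hu : 0 < u.re) (hv : 0 < v.re) :
    Integrable fun p : ℝ × ℝ => gaussTwist u (p.2 + p.1) * gaussTwist v p.1 := by
  have h := (measurePreserving_prod_add (volume : Measure ℝ) (volume : Measure ℝ)
    ).integrable_comp_of_integrable ((integrable_gaussTwist hv).mul_prod (integrable_gaussTwist hu))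
  rw [Measure.volume_eq_prod]
  simpa only [Function.comp_def, mul_comm, add_comm] using h

lemma integral_gaussTwist_add_mul_gaussTwist {u v : ℂ} (huv : 0 < (u + v).re) (z : ℝ) :
    ∫ y, gaussTwist u (z + y) * gaussTwist v y = betaKernel u v z * (Gammaℝ (u + v) / 2) := by
  simp only [gaussTwist_add_mul_gaussTwist]
  rw [integral_const_mul, integral_add_right_eq_self (gaussTwist (u + v)),
    integral_gaussTwist huv]

lemma integrable_betaKernel {u v : ℂ} (hu : 0 < u.re) (hv : 0 < v.re) :
    Integrable (betaKernel u v) := by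
  have huv : 0 < (u + v).re := add_pos hu hv
  have h := (integrable_gaussTwist_add_mul_gaussTwist hu hv).integral_prod_right
  simp only [integral_gaussTwist_add_mul_gaussTwist huv] at h
  exact (integrable_mul_const_iff
    (div_ne_zero (Gammaℝ_ne_zero_of_re_pos huv) two_ne_zero).isUnit _).1 h

lemma integral_betaKernel {u v : ℂ} (hu : 0 < u.re) (hv : 0 < v.re) :
    ∫ z, betaKernel u v z = Gammaℝ u * Gammaℝ v / (2 * Gammaℝ (u + v)) := by
  have huv : 0 < (u + v).re := add_pos hu hv
  have hne : Gammaℝ (u + v) ≠ 0 := Gammaℝ_ne_zero_of_re_pos huv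
  have hswap := integral_integral_swap (f := fun y z => gaussTwist u (z + y) * gaussTwist v y)
    (integrable_gaussTwist_add_mul_gaussTwist hu hv)
  simp only [integral_gaussTwist_add_mul_gaussTwist huv, integral_mul_const,
    integral_add_right_eq_self (gaussTwist u)] at hswap
  rw [integral_const_mul, integral_gaussTwist hu, integral_gaussTwist hv] at hswap
  field_simp
  linear_combination (-4 : ℂ) * hswap

lemma laplace_betaKernel {u v s : ℂ} (hu : 0 < (u + s).re) (hv : 0 < (v - s).re) :
    laplace (betaKernel u v) s = Gammaℝ (u + s) * Gammaℝ (v - s) / (2 * Gammaℝ (u + v)) := by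
  simp only [laplace, betaKernel_mul_cexp, integral_betaKernel hu hv]
  rw [add_add_sub_cancel]

/-- The multiplicative convolution of two twisted Gaussians, in the logarithmic coordinate.
It is a Bessel function up to an exponential factor, and its Laplace transform is a product of
two Gamma functions. -/
def gaussConv (α β : ℂ) (x : ℝ) : ℂ := ∫ u, gaussTwist α u * gaussTwist β (x - u)

lemma gaussConv_eq_convolution (α β : ℂ) :
    gaussConv α β = convolution (gaussTwist α) (gaussTwist β) (.mul ℂ ℂ) := rfl

lemma gaussConv_mul_cexp (α β s : ℂ) (x : ℝ) :
    gaussConv α β x * cexp (s * x) = gaussConv (α + s) (β + s) x := by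
  rw [gaussConv, gaussConv, ← integral_mul_const]
  congr 1; ext u
  rw [← gaussTwist_mul_cexp, ← gaussTwist_mul_cexp, mul_mul_mul_comm, ← Complex.exp_add]
  congr 2; push_cast; ring

lemma continuous_gaussConv_of_pos {α β : ℂ} (hα : 0 < α.re) (hβ : 0 < β.re) :
    Continuous (gaussConv α β) :=
  BddAbove.continuous_convolution_right_of_integrable (.mul ℂ ℂ)
    ⟨_, Set.forall_mem_range.2 (norm_gaussTwist_le hβ)⟩
    (integrable_gaussTwist hα) (continuous_gaussTwist β)

lemma continuous_gaussConv (α β : ℂ) : Continuous (gaussConv α β) := by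
  obtain ⟨d, hd⟩ := exists_gt (max (-α.re) (-β.re))
  obtain ⟨hα, hβ⟩ := max_lt_iff.1 hd
  have h := continuous_gaussConv_of_pos (α := α + d) (β := β + d)
    (by simpa using neg_lt_iff_pos_add'.1 hα) (by simpa using neg_lt_iff_pos_add'.1 hβ)
  have heq : gaussConv α β = fun x => gaussConv (α + d) (β + d) x * cexp (-d * x) := by
    ext x; rw [gaussConv_mul_cexp]; simp
  rw [heq]
  fun_prop

lemma integrable_gaussConv {α β : ℂ} (hα : 0 < α.re) (hβ : 0 < β.re) :
    Integrable (gaussConv α β) :=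
  (integrable_gaussTwist hα).integrable_convolution (.mul ℂ ℂ) (integrable_gaussTwist hβ)

lemma laplace_gaussConv {α β s : ℂ} (hα : 0 < (α + s).re) (hβ : 0 < (β + s).re) :
    laplace (gaussConv α β) s = Gammaℝ (α + s) * Gammaℝ (β + s) / 4 := by
  simp only [laplace, gaussConv_mul_cexp]
  rw [gaussConv_eq_convolution,
    integral_convolution (.mul ℂ ℂ) (integrable_gaussTwist hα) (integrable_gaussTwist hβ),
    ContinuousLinearMap.mul_apply', integral_gaussTwist hα, integral_gaussTwist hβ]
  ring

/-! ### Parseval's formula and Barnes' first lemma -/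

section LaplacePi

variable {ι : Type*}

/-- The point with real parts `d` and imaginary parts `ξ`. -/
def vertPt (d ξ : ι → ℝ) : ι → ℂ := fun j => d j + ξ j * I

lemma vertPt_re (d ξ : ι → ℝ) (j : ι) : (vertPt d ξ j).re = d j := by
  simp [vertPt]

lemma continuous_vertPt (d : ι → ℝ) : Continuous (vertPt d) := by
  unfold vertPt; fun_prop

variable [Fintype ι]

/-- The exponential `e^{⟨s, x⟩}`. -/
def expSum (s : ι → ℂ) (x : ι → ℝ) : ℂ := cexp (∑ j, s j * x j)

/-- The Laplace transform of a function of several real variables. -/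
def laplacePi (f : (ι → ℝ) → ℂ) (s : ι → ℂ) : ℂ := ∫ x, f x * expSum s x

lemma expSum_eq_prod (s : ι → ℂ) (x : ι → ℝ) : expSum s x = ∏ j, cexp (s j * x j) :=
  Complex.exp_sum _ _

lemma expSum_add_left (s t : ι → ℂ) (x : ι → ℝ) : expSum (s + t) x = expSum s x * expSum t x := by
  simp only [expSum_eq_prod, ← Finset.prod_mul_distrib, Pi.add_apply, add_mul, Complex.exp_add]

lemma norm_expSum (s : ι → ℂ) (x : ι → ℝ) : ‖expSum s x‖ = Real.exp (∑ j, (s j).re * x j) := by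
  simp [expSum, Complex.norm_exp]

lemma continuous_expSum_comp {X : Type*} [TopologicalSpace X] {s : X → ι → ℂ} {x : X → ι → ℝ}
    (hs : Continuous s) (hx : Continuous x) : Continuous fun y => expSum (s y) (x y) := by
  unfold expSum; fun_prop

lemma norm_mul_expSum_vertPt (z : ℂ) (d ξ x : ι → ℝ) :
    ‖z * expSum (vertPt d ξ) x‖ = ‖z * expSum (fun j => (d j : ℂ)) x‖ := by
  simp only [norm_mul, norm_expSum, vertPt_re, ofReal_re]

lemma aestronglyMeasurable_of_mul_expSum {f : (ι → ℝ) → ℂ} {s : ι → ℂ}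
    (hf : AEStronglyMeasurable fun x => f x * expSum s x) : AEStronglyMeasurable f := by
  have h := hf.mul (g := fun x => expSum (-s) x)
    (continuous_expSum_comp continuous_const continuous_id).aestronglyMeasurable
  refine h.congr (.of_forall fun x => ?_)
  simp only [Pi.mul_apply]
  rw [mul_assoc, ← expSum_add_left]; simp [expSum]

lemma continuous_laplacePi_vertPt {f : (ι → ℝ) → ℂ} {d : ι → ℝ}
    (hf : Integrable fun x => f x * expSum (fun j => (d j : ℂ)) x) :
    Continuous fun ξ => laplacePi f (vertPt d ξ) := by
  refine continuous_of_dominated (fun ξ => ?_)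
    (fun ξ => .of_forall fun x => (norm_mul_expSum_vertPt (f x) d ξ x).le) hf.norm
    (.of_forall fun x => ?_)
  · exact (aestronglyMeasurable_of_mul_expSum hf.1).mul
      (continuous_expSum_comp continuous_const continuous_id).aestronglyMeasurable
  · exact continuous_const.mul
      (continuous_expSum_comp (continuous_vertPt d) continuous_const)

lemma norm_laplacePi_vertPt_le (f : (ι → ℝ) → ℂ) (d ξ : ι → ℝ) :
    ‖laplacePi f (vertPt d ξ)‖ ≤ ∫ x, ‖f x * expSum (fun j => (d j : ℂ)) x‖ := by
  refine (norm_integral_le_integral_norm _).trans_eq ?_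
  simp only [norm_mul_expSum_vertPt]

lemma memLp_top_laplacePi_vertPt {X : Type*} [TopologicalSpace X] [MeasurableSpace X]
    [OpensMeasurableSpace X] {μ : Measure X} {f : (ι → ℝ) → ℂ} {d : ι → ℝ} {g : X → ι → ℝ}
    (hf : Integrable fun x => f x * expSum (fun j => (d j : ℂ)) x) (hg : Continuous g) :
    MemLp (fun x => laplacePi f (vertPt d (g x))) ⊤ μ :=
  memLp_top_of_bound ((continuous_laplacePi_vertPt hf).comp hg).aestronglyMeasurable _
    (.of_forall fun x => norm_laplacePi_vertPt_le f d (g x))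

lemma laplacePi_prod (g : ι → ℝ → ℂ) (s : ι → ℂ) :
    laplacePi (fun x => ∏ j, g j (x j)) s = ∏ j, laplace (g j) (s j) := by
  simp only [laplacePi, expSum_eq_prod, ← Finset.prod_mul_distrib]
  exact integral_fintype_prod_volume_eq_prod fun j x => g j x * cexp (s j * x)

lemma integral_prod_laplace_neg_mul_expSum {g : ι → ℝ → ℂ} {d : ι → ℝ}
    (hg : ∀ j, Continuous (g j)) (hgi : ∀ j, Integrable fun x : ℝ => g j x * cexp (-d j * x))
    (hgL : ∀ j, Integrable fun t : ℝ => laplace (g j) (-(d j + t * I))) (x : ι → ℝ) :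
    ∫ ξ, (∏ j, laplace (g j) (-vertPt d ξ j)) * expSum (vertPt d ξ) x =
      (2 * π) ^ Fintype.card ι * ∏ j, g j (x j) := by
  simp only [expSum_eq_prod, ← Finset.prod_mul_distrib, vertPt]
  rw [integral_fintype_prod_volume_eq_prod fun j (t : ℝ) =>
      laplace (g j) (-(d j + t * I)) * cexp ((d j + t * I) * x j),
    Finset.prod_congr rfl fun j _ =>
      integral_laplace_neg_mul_cexp (hg j) (hgi j) (hgL j) (x j),
    Finset.prod_mul_distrib, Finset.prod_const, Finset.card_univ]

lemma integral_laplacePi_mul_prod_laplace_neg {f : (ι → ℝ) → ℂ} {g : ι → ℝ → ℂ} {d : ι → ℝ}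
    (hf : Integrable fun x => f x * expSum (fun j => (d j : ℂ)) x)
    (hg : ∀ j, Continuous (g j)) (hgi : ∀ j, Integrable fun x : ℝ => g j x * cexp (-d j * x))
    (hgL : ∀ j, Integrable fun t : ℝ => laplace (g j) (-(d j + t * I))) :
    ∫ ξ, laplacePi f (vertPt d ξ) * ∏ j, laplace (g j) (-vertPt d ξ j) =
      (2 * π) ^ Fintype.card ι * ∫ x, f x * ∏ j, g j (x j) := by
  have hL : Integrable fun ξ : ι → ℝ => ∏ j, laplace (g j) (-vertPt d ξ j) :=
    Integrable.fintype_prod hgL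
  have hphase : Continuous fun p : (ι → ℝ) × (ι → ℝ) => expSum (fun j => p.1 j * I) p.2 :=
    continuous_expSum_comp (by fun_prop) continuous_snd
  have hint : Integrable (fun p : (ι → ℝ) × (ι → ℝ) =>
      f p.2 * ((∏ j, laplace (g j) (-vertPt d p.1 j)) * expSum (vertPt d p.1) p.2))
      (volume.prod volume) := by
    refine ((hL.mul_prod hf).bdd_mul (c := 1) hphase.aestronglyMeasurable
      (.of_forall fun p => by simp [norm_expSum])).congr (.of_forall fun p => ?_)
    have hsplit : vertPt d p.1 = (fun j => p.1 j * I) + fun j => (d j : ℂ) := by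
      ext j; simp [vertPt, add_comm]
    simp only [hsplit, expSum_add_left]
    ring
  calc _ = ∫ ξ, ∫ x, f x * ((∏ j, laplace (g j) (-vertPt d ξ j)) * expSum (vertPt d ξ) x) := by
        congr 1; ext ξ
        rw [laplacePi, ← integral_mul_const]
        congr 1; ext x; ring
    _ = _ := by
        rw [integral_integral_swap hint, ← integral_const_mul]
        congr 1; ext x
        rw [integral_const_mul, integral_prod_laplace_neg_mul_expSum hg hgi hgL]
        ring

end LaplacePi

lemma integrable_Gammaℝ_sub_vertical {δ : ℂ} {d : ℝ} (hδ : d < δ.re) :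
    Integrable fun t : ℝ => Gammaℝ (δ - (d + t * I)) := by
  convert (integrable_Gammaℝ_vertical (s := δ - d) (by simpa using hδ)).comp_neg using 3
  push_cast; ring

lemma memLp_top_Gammaℝ_sub_vertical {δ : ℂ} {d : ℝ} (hδ : d < δ.re) :
    MemLp (fun t : ℝ => Gammaℝ (δ - (d + t * I))) ⊤ :=
  memLp_top_Gammaℝ_comp (by fun_prop) (sub_pos.2 hδ) fun t => by simp

lemma integrable_Gammaℝ_mul_Gammaℝ_neg {α δ : ℂ} {d : ℝ} (hα : 0 < α.re + d) (hδ : d < δ.re) :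
    Integrable fun t : ℝ => Gammaℝ (α + (d + t * I)) * Gammaℝ (δ - (d + t * I)) :=
  (integrable_Gammaℝ_sub_vertical hδ).mul_of_top_right
    (memLp_top_Gammaℝ_comp (by fun_prop) hα fun t => by simp)

lemma Gammaℝ_mul_Gammaℝ_eq_laplace_betaKernel {u v s : ℂ} (hu : 0 < (u + s).re)
    (hv : 0 < (v - s).re) :
    Gammaℝ (u + s) * Gammaℝ (v - s) = 2 * Gammaℝ (u + v) * laplace (betaKernel u v) s := by
  have hne : Gammaℝ (u + v) ≠ 0 := Gammaℝ_ne_zero_of_re_pos (by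
    rw [← add_add_sub_cancel u v s, add_re]; linarith)
  rw [laplace_betaKernel hu hv]
  field_simp

lemma integral_prod_laplace_betaKernel {ι : Type*} [Fintype ι] {α β γ δ : ι → ℂ} {c : ι → ℝ}
    (hα : ∀ j, 0 < (α j).re + c j) (hβ : ∀ j, 0 < (β j).re + c j)
    (hγ : ∀ j, c j < (γ j).re) (hδ : ∀ j, c j < (δ j).re) :
    ∫ ξ, ∏ j, laplace (betaKernel (β j) (γ j)) (vertPt c ξ j) *
        laplace (betaKernel (δ j) (α j)) (-vertPt c ξ j) =
      (2 * π) ^ Fintype.card ι * ∏ j, ∫ x, betaKernel (β j + δ j) (γ j + α j) x := by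
  have hf : Integrable fun x : ι → ℝ =>
      (∏ j, betaKernel (β j) (γ j) (x j)) * expSum (fun j => (c j : ℂ)) x := by
    simp only [expSum_eq_prod, ← Finset.prod_mul_distrib, betaKernel_mul_cexp]
    exact Integrable.fintype_prod fun j => integrable_betaKernel (by simpa using hβ j)
      (by simpa using hγ j)
  have hgi (j : ι) : Integrable fun x : ℝ => betaKernel (δ j) (α j) x * cexp (-c j * x) := by
    simp only [betaKernel_mul_cexp]
    exact integrable_betaKernel (by simpa using hδ j) (by simpa using hα j)
  have hgL (j : ι) : Integrable fun t : ℝ => laplace (betaKernel (δ j) (α j)) (-(c j + t * I)) := by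
    refine ((integrable_Gammaℝ_mul_Gammaℝ_neg (hα j) (hδ j)).div_const
      (2 * Gammaℝ (δ j + α j))).congr (.of_forall fun t => ?_)
    simp only
    rw [laplace_betaKernel (by simpa using hδ j) (by simpa using hα j), sub_neg_eq_add,
      ← sub_eq_add_neg, mul_comm (Gammaℝ _)]
  have hparseval := integral_laplacePi_mul_prod_laplace_neg hf
    (fun j => continuous_betaKernel _ _) hgi hgL
  simpa only [laplacePi_prod, ← Finset.prod_mul_distrib, betaKernel_mul_betaKernel,
    integral_fintype_prod_volume_eq_prod fun j => betaKernel (β j + δ j) (γ j + α j)]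
    using hparseval

lemma integral_prod_Gammaℝ_barnes {ι : Type*} [Fintype ι] {α β γ δ : ι → ℂ} {c : ι → ℝ}
    (hα : ∀ j, 0 < (α j).re + c j) (hβ : ∀ j, 0 < (β j).re + c j)
    (hγ : ∀ j, c j < (γ j).re) (hδ : ∀ j, c j < (δ j).re) :
    ∫ ξ, ∏ j, Gammaℝ (α j + vertPt c ξ j) * Gammaℝ (β j + vertPt c ξ j) *
        (Gammaℝ (γ j - vertPt c ξ j) * Gammaℝ (δ j - vertPt c ξ j)) =
      (4 * π) ^ Fintype.card ι * ∏ j, Gammaℝ (α j + γ j) * Gammaℝ (α j + δ j) *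
        (Gammaℝ (β j + γ j) * Gammaℝ (β j + δ j)) / Gammaℝ (α j + β j + γ j + δ j) := by
  have hfactor (ξ : ι → ℝ) (j : ι) :
      Gammaℝ (α j + vertPt c ξ j) * Gammaℝ (β j + vertPt c ξ j) *
        (Gammaℝ (γ j - vertPt c ξ j) * Gammaℝ (δ j - vertPt c ξ j)) =
      2 * Gammaℝ (β j + γ j) * (2 * Gammaℝ (δ j + α j)) *
        (laplace (betaKernel (β j) (γ j)) (vertPt c ξ j) *
          laplace (betaKernel (δ j) (α j)) (-vertPt c ξ j)) := by
    have hβγ := Gammaℝ_mul_Gammaℝ_eq_laplace_betaKernel (u := β j) (v := γ j) (s := vertPt c ξ j)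
      (by simpa [vertPt_re] using hβ j) (by simpa [vertPt_re] using hγ j)
    have hδα := Gammaℝ_mul_Gammaℝ_eq_laplace_betaKernel (u := δ j) (v := α j) (s := -vertPt c ξ j)
      (by simpa [vertPt_re] using hδ j) (by simpa [vertPt_re] using hα j)
    rw [sub_neg_eq_add, ← sub_eq_add_neg] at hδα
    linear_combination Gammaℝ (β j + vertPt c ξ j) * Gammaℝ (γ j - vertPt c ξ j) * hδα +
      2 * Gammaℝ (δ j + α j) * laplace (betaKernel (δ j) (α j)) (-vertPt c ξ j) * hβγ
  simp only [hfactor]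
  simp only [Finset.prod_mul_distrib (g := fun _ => laplace _ _ * laplace _ _),
    integral_const_mul]
  rw [integral_prod_laplace_betaKernel hα hβ hγ hδ, ← Finset.card_univ, ← Finset.prod_const,
    ← Finset.prod_const, ← Finset.prod_mul_distrib, ← Finset.prod_mul_distrib,
    ← Finset.prod_mul_distrib]
  refine Finset.prod_congr rfl fun j _ => ?_
  rw [integral_betaKernel (by rw [add_re]; linarith [hβ j, hδ j])
      (by rw [add_re]; linarith [hγ j, hα j]),
    show β j + δ j + (γ j + α j) = α j + β j + γ j + δ j by ring, add_comm (γ j), add_comm (δ j)]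
  ring

lemma integral_laplacePi_mul_prod_Gammaℝ {ι : Type*} [Fintype ι] {f : (ι → ℝ) → ℂ} {d : ι → ℝ}
    {α β : ι → ℂ} (hf : Integrable fun x => f x * expSum (fun j => (d j : ℂ)) x)
    (hα : ∀ j, d j < (α j).re) (hβ : ∀ j, d j < (β j).re) :
    ∫ ξ, laplacePi f (vertPt d ξ) *
        ∏ j, Gammaℝ (α j - vertPt d ξ j) * Gammaℝ (β j - vertPt d ξ j) =
      (8 * π) ^ Fintype.card ι * ∫ x, f x * ∏ j, gaussConv (α j) (β j) (x j) := by
  have hL (j : ι) {z : ℂ} (hz : z.re = d j) :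
      laplace (gaussConv (α j) (β j)) (-z) = Gammaℝ (α j - z) * Gammaℝ (β j - z) / 4 := by
    rw [laplace_gaussConv (by simpa [hz] using hα j) (by simpa [hz] using hβ j),
      ← sub_eq_add_neg, ← sub_eq_add_neg]
  have hparseval := integral_laplacePi_mul_prod_laplace_neg hf
    (g := fun j => gaussConv (α j) (β j)) (fun j => continuous_gaussConv _ _)
    (fun j => by
      simp only [gaussConv_mul_cexp]
      exact integrable_gaussConv (by simpa using hα j) (by simpa using hβ j))
    (fun j => by
      simp only [fun t : ℝ => hL j (show (d j + t * I : ℂ).re = d j by simp)]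
      exact ((integrable_Gammaℝ_sub_vertical (hβ j)).mul_of_top_right
        (memLp_top_Gammaℝ_sub_vertical (hα j))).div_const 4)
  simp only [fun ξ j => hL j (vertPt_re d ξ j), Finset.prod_div_distrib, Finset.prod_const,
    Finset.card_univ, mul_div_assoc', integral_div] at hparseval
  rw [(div_eq_iff (pow_ne_zero _ (by norm_num))).1 hparseval,
    show (8 * π : ℂ) = 2 * π * 4 by ring, mul_pow _ (4 : ℂ)]
  ring

/-! ### The Whittaker recursion in logarithmic coordinates -/

lemma integral_pi_mul_removeNth {m : ℕ} (i : Fin (m + 1)) (φ : ℝ → ℂ) (ψ : (Fin m → ℝ) → ℂ) :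
    ∫ v : Fin (m + 1) → ℝ, φ (v i) * ψ (i.removeNth v) = (∫ x, φ x) * ∫ u, ψ u := by
  rw [← integral_prod_mul, ← Measure.volume_eq_prod,
    ← (volume_preserving_piFinSuccAbove (fun _ => ℝ) i).integral_comp']
  rfl

lemma integrable_pi_mul_removeNth {m : ℕ} (i : Fin (m + 1)) {φ : ℝ → ℂ} {ψ : (Fin m → ℝ) → ℂ}
    (hφ : Integrable φ) (hψ : Integrable ψ) :
    Integrable fun v : Fin (m + 1) → ℝ => φ (v i) * ψ (i.removeNth v) := by
  have h := hφ.mul_prod hψ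
  rw [← Measure.volume_eq_prod] at h
  exact (volume_preserving_piFinSuccAbove (fun _ => ℝ) i).integrable_comp_of_integrable h

section ShearConv

variable {m : ℕ} {f : (Fin m → ℝ) → ℂ} {d : Fin m → ℝ} {α β : Fin (m + 1) → ℂ}

/-- The convolution at `x` of twisted Gaussians in `w` and `x - w`, weighted by `f` at the sums of
neighbouring coordinates of `w` and `x - w`. This is the integral operator of the Whittaker
recursion in logarithmic coordinates. -/
def shearConv (f : (Fin m → ℝ) → ℂ) (α β : Fin (m + 1) → ℂ) (x : Fin (m + 1) → ℝ) : ℂ :=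
  ∫ w : Fin (m + 1) → ℝ, f (fun j => w j.castSucc + (x j.succ - w j.succ)) *
    ((∏ j, gaussTwist (α j) (w j)) * ∏ j, gaussTwist (β j) (x j - w j))

/-- The translation that makes the argument of `f` in `shearConv` independent of `w`. -/
def shearShift (w : Fin (m + 1) → ℝ) : Fin (m + 1) → ℝ := Fin.cons 0 (Fin.init w) - w

/-- The integrand of `shearConv` in the variables `w` and `y = x + shearShift w`. -/
def shearKernel (f : (Fin m → ℝ) → ℂ) (α β : Fin (m + 1) → ℂ) (w y : Fin (m + 1) → ℝ) : ℂ :=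
  gaussTwist (β 0) (y 0) * f (Fin.tail y) * (gaussTwist (α (Fin.last m)) (w (Fin.last m)) *
    ∏ j : Fin m, gaussTwist (α j.castSucc) (w j.castSucc) *
      gaussTwist (β j.succ) (y j.succ - w j.castSucc))

lemma prod_gaussTwist_mul_expSum {ι : Type*} [Fintype ι] (α s : ι → ℂ) (x : ι → ℝ) :
    (∏ j, gaussTwist (α j) (x j)) * expSum s x = ∏ j, gaussTwist ((α + s) j) (x j) := by
  simp only [expSum_eq_prod, ← Finset.prod_mul_distrib, gaussTwist_mul_cexp, Pi.add_apply]

lemma shearConv_mul_expSum (s : Fin (m + 1) → ℂ) (x : Fin (m + 1) → ℝ) :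
    shearConv f α β x * expSum s x = shearConv f (α + s) (β + s) x := by
  rw [shearConv, shearConv, ← integral_mul_const]
  congr 1; ext w
  have hsplit : expSum s x = expSum s w * expSum s (x - w) := by
    simp only [expSum, ← Complex.exp_add, ← Finset.sum_add_distrib, Pi.sub_apply, ofReal_sub]
    congr! 2; ring
  have hβ := prod_gaussTwist_mul_expSum β s (x - w)
  simp only [Pi.sub_apply] at hβ
  rw [hsplit, ← prod_gaussTwist_mul_expSum α, ← hβ]
  ring

lemma shearConv_eq_integral_shearKernel (x : Fin (m + 1) → ℝ) :
    shearConv f α β x = ∫ w, shearKernel f α β w (x + shearShift w) := by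
  rw [shearConv]
  congr 1; ext w
  have htail : (fun j : Fin m => w j.castSucc + (x j.succ - w j.succ)) =
      Fin.tail (x + shearShift w) := by
    ext j; simp only [Fin.tail, shearShift, Pi.add_apply, Pi.sub_apply, Fin.cons_succ, Fin.init]
    ring
  have hsub (j : Fin m) : (x + shearShift w) j.succ - w j.castSucc = x j.succ - w j.succ := by
    simp only [shearShift, Pi.add_apply, Pi.sub_apply, Fin.cons_succ, Fin.init]
    ring
  have hzero : (x + shearShift w) 0 = x 0 - w 0 := by
    simp only [shearShift, Pi.add_apply, Pi.sub_apply, Fin.cons_zero]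
    ring
  simp only [shearKernel, hsub, hzero, ← htail, Finset.prod_mul_distrib]
  rw [Fin.prod_univ_castSucc (fun j => gaussTwist (α j) (w j)),
    Fin.prod_univ_succ (fun j => gaussTwist (β j) (x j - w j))]
  ring

lemma measurePreserving_shearShift :
    MeasurePreserving
      (fun p : (Fin (m + 1) → ℝ) × (Fin (m + 1) → ℝ) => (p.1, p.2 + shearShift p.1))
      (volume.prod volume) (volume.prod volume) := by
  refine (MeasurePreserving.id volume).skew_product
    (g := fun w x : Fin (m + 1) → ℝ => x + shearShift w) ?_
    (.of_forall fun w => map_add_right_eq_self volume (shearShift w))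
  have : Continuous fun w : Fin (m + 1) → ℝ => shearShift w :=
    (Continuous.finCons continuous_const (by unfold Fin.init; fun_prop)).sub continuous_id
  exact (continuous_snd.add (this.comp continuous_fst)).measurable

lemma shearKernel_eq_bounded_mul (d : Fin m → ℝ) (w y : Fin (m + 1) → ℝ) :
    shearKernel f α β w y =
      (∏ j : Fin m, gaussTwist (β j.succ - d j) (y j.succ - w j.castSucc)) *
        ((gaussTwist (α (Fin.last m)) (w (Fin.last m)) *
          ∏ j : Fin m, gaussTwist (α j.castSucc - d j) (w j.castSucc)) *
        (gaussTwist (β 0) (y 0) *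
          (f (Fin.tail y) * expSum (fun j => (d j : ℂ)) (Fin.tail y)))) := by
  have hfactor (j : Fin m) : gaussTwist (α j.castSucc) (w j.castSucc) *
      gaussTwist (β j.succ) (y j.succ - w j.castSucc) =
      gaussTwist (β j.succ - d j) (y j.succ - w j.castSucc) *
        gaussTwist (α j.castSucc - d j) (w j.castSucc) * cexp (d j * y j.succ) := by
    rw [← sub_add_cancel (α j.castSucc) (d j : ℂ), ← sub_add_cancel (β j.succ) (d j : ℂ),
      ← gaussTwist_mul_cexp, ← gaussTwist_mul_cexp, add_sub_cancel_right, add_sub_cancel_right,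
      mul_mul_mul_comm, ← Complex.exp_add]
    push_cast
    ring_nf
  simp only [shearKernel, hfactor, Finset.prod_mul_distrib, expSum_eq_prod, Fin.tail]
  ring

lemma integrable_shearKernel (hf : Integrable fun x => f x * expSum (fun j => (d j : ℂ)) x)
    (hα : ∀ j : Fin m, d j < (α j.castSucc).re) (hα' : 0 < (α (Fin.last m)).re)
    (hβ : ∀ j : Fin m, d j < (β j.succ).re) (hβ' : 0 < (β 0).re) :
    Integrable (fun p : (Fin (m + 1) → ℝ) × (Fin (m + 1) → ℝ) => shearKernel f α β p.1 p.2)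
      (volume.prod volume) := by
  simp only [shearKernel_eq_bounded_mul d]
  have hw : Integrable fun w : Fin (m + 1) → ℝ => gaussTwist (α (Fin.last m)) (w (Fin.last m)) *
      ∏ j : Fin m, gaussTwist (α j.castSucc - d j) (w j.castSucc) := by
    simpa only [Fin.removeNth_last, Fin.init] using integrable_pi_mul_removeNth (Fin.last m)
      (integrable_gaussTwist hα') (Integrable.fintype_prod (f := fun (j : Fin m) (x : ℝ) =>
        gaussTwist (α j.castSucc - d j) x) fun j => integrable_gaussTwist (by simpa using hα j))
  have hy := integrable_pi_mul_removeNth 0 (integrable_gaussTwist hβ') hf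
  refine (hw.mul_prod hy).bdd_mul (c := ∏ j : Fin m, Real.exp ((β j.succ - d j).re ^ 2))
    ?_ (.of_forall fun p => ?_)
  · exact (continuous_finsetProd _ fun j _ =>
      (continuous_gaussTwist _).comp (by fun_prop)).aestronglyMeasurable
  · rw [norm_prod]
    exact Finset.prod_le_prod (fun _ _ => norm_nonneg _)
      fun j _ => norm_gaussTwist_le (by simpa using hβ j) _

lemma integral_shearKernel_left (hα' : 0 < (α (Fin.last m)).re) (y : Fin (m + 1) → ℝ) :
    ∫ w, shearKernel f α β w y = Gammaℝ (α (Fin.last m)) / 2 * (gaussTwist (β 0) (y 0) *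
      (f (Fin.tail y) * ∏ j : Fin m, gaussConv (α j.castSucc) (β j.succ) (Fin.tail y j))) := by
  have h := integral_pi_mul_removeNth (Fin.last m) (gaussTwist (α (Fin.last m)))
    fun w => ∏ j : Fin m, gaussTwist (α j.castSucc) (w j) *
      gaussTwist (β j.succ) (y j.succ - w j)
  rw [integral_gaussTwist hα', integral_fintype_prod_volume_eq_prod fun (j : Fin m) (x : ℝ) =>
    gaussTwist (α j.castSucc) x * gaussTwist (β j.succ) (y j.succ - x)] at h
  simp only [shearKernel, integral_const_mul]
  simp only [Fin.removeNth_last, Fin.init] at h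
  rw [h]
  simp only [gaussConv, Fin.tail]
  ring

lemma integral_shearConv (hf : Integrable fun x => f x * expSum (fun j => (d j : ℂ)) x)
    (hα : ∀ j : Fin m, d j < (α j.castSucc).re) (hα' : 0 < (α (Fin.last m)).re)
    (hβ : ∀ j : Fin m, d j < (β j.succ).re) (hβ' : 0 < (β 0).re) :
    ∫ x, shearConv f α β x = Gammaℝ (β 0) * Gammaℝ (α (Fin.last m)) / 4 *
      ∫ y, f y * ∏ j : Fin m, gaussConv (α j.castSucc) (β j.succ) (y j) := by
  have hK := integrable_shearKernel hf hα hα' hβ hβ'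
  calc _ = ∫ w, ∫ x, shearKernel f α β w (x + shearShift w) := by
        simp only [shearConv_eq_integral_shearKernel]
        exact integral_integral_swap
          (measurePreserving_shearShift.integrable_comp_of_integrable hK).swap
    _ = ∫ y, ∫ w, shearKernel f α β w y := by
        simp only [fun w => integral_add_right_eq_self (μ := volume) (shearKernel f α β w)
          (shearShift w)]
        exact integral_integral_swap hK
    _ = _ := by
        simp only [integral_shearKernel_left hα', integral_const_mul]
        have h := integral_pi_mul_removeNth 0 (gaussTwist (β 0))
          fun y => f y * ∏ j : Fin m, gaussConv (α j.castSucc) (β j.succ) (y j)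
        simp only [Fin.removeNth_zero] at h
        rw [h, integral_gaussTwist hβ']
        ring

variable {s : Fin (m + 1) → ℂ}

lemma integrable_shearConv_mul_expSum
    (hf : Integrable fun x => f x * expSum (fun j => (d j : ℂ)) x)
    (hα : ∀ j : Fin m, d j < (α j.castSucc + s j.castSucc).re)
    (hα' : 0 < (α (Fin.last m) + s (Fin.last m)).re)
    (hβ : ∀ j : Fin m, d j < (β j.succ + s j.succ).re) (hβ' : 0 < (β 0 + s 0).re) :
    Integrable fun x => shearConv f α β x * expSum s x := by
  simp only [shearConv_mul_expSum]
  simp only [shearConv_eq_integral_shearKernel]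
  exact (measurePreserving_shearShift.integrable_comp_of_integrable
    (integrable_shearKernel (α := α + s) (β := β + s) hf hα hα' hβ hβ')).integral_prod_right

lemma laplacePi_shearConv (hf : Integrable fun x => f x * expSum (fun j => (d j : ℂ)) x)
    (hα : ∀ j : Fin m, d j < (α j.castSucc + s j.castSucc).re)
    (hα' : 0 < (α (Fin.last m) + s (Fin.last m)).re)
    (hβ : ∀ j : Fin m, d j < (β j.succ + s j.succ).re) (hβ' : 0 < (β 0 + s 0).re) :
    4 * (8 * π) ^ m * laplacePi (shearConv f α β) s =
      Gammaℝ (β 0 + s 0) * Gammaℝ (α (Fin.last m) + s (Fin.last m)) *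
        ∫ ξ, laplacePi f (vertPt d ξ) *
          ∏ j : Fin m, Gammaℝ (α j.castSucc + s j.castSucc - vertPt d ξ j) *
            Gammaℝ (β j.succ + s j.succ - vertPt d ξ j) := by
  rw [integral_laplacePi_mul_prod_Gammaℝ hf hα hβ, Fintype.card_fin, laplacePi]
  simp only [shearConv_mul_expSum]
  rw [integral_shearConv (α := α + s) (β := β + s) hf hα hα' hβ hβ']
  simp only [Pi.add_apply]
  ring

end ShearConv

section ExtendedVectors

variable {m : ℕ} {b : ℂ} {z : Fin m → ℂ}

/-- The vector `(z, -b)`. -/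
def snocNeg (b : ℂ) (z : Fin m → ℂ) : Fin (m + 1) → ℂ := Fin.snoc (α := fun _ => ℂ) z (-b)

/-- The vector `(0, z)`. -/
def consZero (z : Fin m → ℂ) : Fin (m + 1) → ℂ := Fin.cons (α := fun _ => ℂ) 0 z

lemma snocNeg_castSucc (j : Fin m) : snocNeg b z j.castSucc = z j :=
  Fin.snoc_castSucc (α := fun _ => ℂ) (-b) z j

lemma snocNeg_last : snocNeg b z (Fin.last m) = -b := Fin.snoc_last (α := fun _ => ℂ) (-b) z

lemma consZero_succ (j : Fin m) : consZero z j.succ = z j := rfl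

lemma consZero_zero : consZero z 0 = 0 := rfl

lemma continuous_snocNeg (b : ℂ) : Continuous (snocNeg b : (Fin m → ℂ) → _) :=
  Continuous.finSnoc continuous_id continuous_const

lemma continuous_consZero : Continuous (consZero : (Fin m → ℂ) → _) :=
  Continuous.finCons continuous_const continuous_id

end ExtendedVectors

section LogWhitt

/-- The exponents of the Gaussian factor in `w` in the Whittaker recursion: zero except for the
last. -/
def lastExp (m : ℕ) (b : ℂ) : Fin (m + 1) → ℂ := Fin.snoc (α := fun _ => ℂ) (fun _ => 0) b

/-- The class one `GL_{m+1}(ℝ)` Whittaker function in logarithmic coordinates. -/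
def logWhitt : (m : ℕ) → (ℕ → ℂ) → (Fin m → ℝ) → ℂ
  | 0, _ => fun _ => 1
  | m + 1, a => fun x => 2 ^ (m + 1) * shearConv (logWhitt m fun j => a (j + 1))
      (lastExp m (sumA (m + 1) fun j => a (j + 1))) (fun _ => a 0) x

lemma lastExp_castSucc (m : ℕ) (b : ℂ) (j : Fin m) : lastExp m b j.castSucc = 0 := by
  simp [lastExp]

lemma lastExp_last (m : ℕ) (b : ℂ) : lastExp m b (Fin.last m) = b := by
  simp [lastExp]

lemma sumA_re_nonneg {n : ℕ} {a : ℕ → ℂ} (ha : ∀ j < n, 0 ≤ (a j).re) : 0 ≤ (sumA n a).re := by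
  rw [sumA, Complex.re_sum]
  exact Finset.sum_nonneg fun j hj => ha j (Finset.mem_range.1 hj)

lemma exists_pos_lt {ι : Type*} [Finite ι] {s : ι → ℝ} (hs : ∀ j, 0 < s j) :
    ∃ ε, 0 < ε ∧ ∀ j, ε < s j := by
  have h := Filter.eventually_all.2 fun j => (eventually_lt_nhds (hs j)).filter_mono
    (nhdsWithin_le_nhds (s := Set.Ioi 0))
  obtain ⟨ε, hlt, hpos⟩ := (h.and self_mem_nhdsWithin).exists
  exact ⟨ε, hpos, hlt⟩

lemma integrable_logWhitt_mul_expSum (m : ℕ) {a : ℕ → ℂ} (ha : ∀ j < m + 1, 0 ≤ (a j).re)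
    {s : Fin m → ℂ} (hs : ∀ j, 0 < (s j).re) :
    Integrable fun x => logWhitt m a x * expSum s x := by
  induction m generalizing a with
  | zero =>
    rw [Measure.volume_pi_eq_dirac 0]
    exact integrable_dirac enorm_lt_top
  | succ m ih =>
    obtain ⟨ε, hε, hεs⟩ := exists_pos_lt hs
    have ha' : ∀ j < m + 1, 0 ≤ (a (j + 1)).re := fun j hj => ha _ (by lia)
    have ha₀ : 0 ≤ (a 0).re := ha 0 (by lia)
    simp only [logWhitt, mul_assoc]
    refine (integrable_shearConv_mul_expSum (d := fun _ => ε)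
      (ih ha' fun _ => by simpa using hε) (fun j => ?_) ?_ (fun j => ?_) ?_).const_mul _
    · simpa [lastExp_castSucc] using hεs j.castSucc
    · rw [lastExp_last, add_re]; exact add_pos_of_nonneg_of_pos (sumA_re_nonneg ha') (hs _)
    · rw [add_re]; exact lt_add_of_nonneg_of_lt ha₀ (hεs _)
    · rw [add_re]; exact add_pos_of_nonneg_of_pos ha₀ (hs 0)

/-- The kernel of the recursion for the Mellin transforms of the Whittaker functions. -/
def recKernel {m : ℕ} (a₀ b : ℂ) (s : Fin (m + 1) → ℂ) (z : Fin m → ℂ) : ℂ :=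
  ∏ i, Gammaℝ (s i - snocNeg b z i) * Gammaℝ (a₀ + s i - consZero z i)

lemma recKernel_eq_prod_castSucc {m : ℕ} (a₀ b : ℂ) (s : Fin (m + 1) → ℂ) (z : Fin m → ℂ) :
    recKernel a₀ b s z = (∏ j : Fin m, Gammaℝ (s j.castSucc - z j)) *
      (Gammaℝ (s (Fin.last m) + b) * ∏ i, Gammaℝ (a₀ + s i - consZero z i)) := by
  rw [recKernel, Finset.prod_mul_distrib, Fin.prod_univ_castSucc]
  simp only [snocNeg_castSucc, snocNeg_last, sub_neg_eq_add, mul_assoc]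

lemma recKernel_eq_prod {m : ℕ} (a₀ b : ℂ) (s : Fin (m + 1) → ℂ) (z : Fin m → ℂ) :
    recKernel a₀ b s z = Gammaℝ (a₀ + s 0) * Gammaℝ (s (Fin.last m) + b) *
      ∏ j : Fin m, Gammaℝ (s j.castSucc - z j) * Gammaℝ (a₀ + s j.succ - z j) := by
  rw [recKernel_eq_prod_castSucc, Fin.prod_univ_succ, Finset.prod_mul_distrib]
  simp only [consZero_succ, consZero_zero, sub_zero]
  ring

lemma laplacePi_logWhitt_succ (m : ℕ) {a : ℕ → ℂ} (ha : ∀ j < m + 2, 0 ≤ (a j).re)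
    {s : Fin (m + 1) → ℂ} {ε : ℝ} (hε : 0 < ε) (hs : ∀ j, ε < (s j).re) :
    2 * (4 * π) ^ m * laplacePi (logWhitt (m + 1) a) s =
      ∫ ξ, laplacePi (logWhitt m fun j => a (j + 1)) (vertPt (fun _ => ε) ξ) *
        recKernel (a 0) (sumA (m + 1) fun j => a (j + 1)) s (vertPt (fun _ => ε) ξ) := by
  have ha' : ∀ j < m + 1, 0 ≤ (a (j + 1)).re := fun j hj => ha _ (by lia)
  have ha₀ : 0 ≤ (a 0).re := ha 0 (by lia)
  have h := laplacePi_shearConv (d := fun _ => ε) (s := s)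
    (α := lastExp m (sumA (m + 1) fun j => a (j + 1))) (β := fun _ => a 0)
    (integrable_logWhitt_mul_expSum m ha' fun _ => by simpa using hε)
    (fun j => by simpa [lastExp_castSucc] using hs j.castSucc)
    (by rw [lastExp_last, add_re]
        exact add_pos_of_nonneg_of_pos (sumA_re_nonneg ha') (hε.trans (hs _)))
    (fun j => by rw [add_re]; exact lt_add_of_nonneg_of_lt ha₀ (hs _))
    (by rw [add_re]; exact add_pos_of_nonneg_of_pos ha₀ (hε.trans (hs 0)))
  simp only [lastExp_castSucc, lastExp_last, zero_add, add_comm (sumA _ _)] at h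
  simp only [recKernel_eq_prod, mul_left_comm (laplacePi _ _), integral_const_mul]
  rw [← h, show (8 * π : ℂ) ^ m = 2 ^ m * (4 * π) ^ m by rw [← mul_pow]; congr 1; ring]
  simp only [laplacePi, logWhitt, mul_assoc, integral_const_mul]
  ring

end LogWhitt

/-! ### The reproducing formula -/

section ReproducingKernel

/-- The kernel of the reproducing formula for the Mellin transforms of the Whittaker functions. -/
def reproKernel {m : ℕ} (σ b : ℂ) (p q : Fin m → ℂ) : ℂ :=
  (∏ j, Gammaℝ (p j - q j)) * ∏ i, Gammaℝ (σ + consZero p i - snocNeg b q i)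

/-- The value of the integrals over intermediate vectors of products of `recKernel` and
`reproKernel`, up to normalization. -/
def kernelValue {m : ℕ} (σ a₀ b : ℂ) (p : Fin (m + 1) → ℂ) (u : Fin m → ℂ) : ℂ :=
  ∏ i, Gammaℝ (p i - snocNeg b u i) * Gammaℝ (σ + consZero p i.castSucc - snocNeg b u i) *
    Gammaℝ (a₀ + p i - consZero u i) * Gammaℝ (σ + a₀ + p i - snocNeg b u i) /
      Gammaℝ (σ + a₀ + p i + consZero p i.castSucc - snocNeg b u i - consZero u i)

variable {m : ℕ} {σ a₀ b : ℂ} {p : Fin (m + 1) → ℂ} {u : Fin m → ℂ}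

lemma reproKernel_eq_prod_castSucc (p q : Fin m → ℂ) :
    reproKernel σ b p q = Gammaℝ (σ + consZero p (Fin.last m) + b) *
      ∏ j, Gammaℝ (p j - q j) * Gammaℝ (σ + consZero p j.castSucc - q j) := by
  rw [reproKernel, Fin.prod_univ_castSucc, Finset.prod_mul_distrib]
  simp only [snocNeg_castSucc, snocNeg_last, sub_neg_eq_add]
  ring

lemma reproKernel_eq_prod_succ (p q : Fin m → ℂ) :
    reproKernel σ b p q = Gammaℝ (σ - snocNeg b q 0) *
      ∏ j, Gammaℝ (p j - q j) * Gammaℝ (σ + p j - snocNeg b q j.succ) := by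
  rw [reproKernel, Fin.prod_univ_succ, Finset.prod_mul_distrib]
  simp only [consZero_succ, consZero_zero, add_zero]
  ring

lemma kernelValue_eq_prod_succ (h : Gammaℝ (σ + a₀ + p 0 - snocNeg b u 0) ≠ 0) :
    kernelValue σ a₀ b p u =
      Gammaℝ (a₀ + p 0) * Gammaℝ (p (Fin.last m) + b) * Gammaℝ (σ - snocNeg b u 0) *
        ∏ j : Fin m, Gammaℝ (-u j + p j.castSucc) * Gammaℝ (-u j + (a₀ + p j.succ)) *
          (Gammaℝ (σ - snocNeg b u j.succ + p j.castSucc) *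
            Gammaℝ (σ - snocNeg b u j.succ + (a₀ + p j.succ))) /
          Gammaℝ (-u j + (σ - snocNeg b u j.succ) + p j.castSucc + (a₀ + p j.succ)) := by
  have hfactor (j : Fin m) : Gammaℝ (-u j + p j.castSucc) * Gammaℝ (-u j + (a₀ + p j.succ)) *
          (Gammaℝ (σ - snocNeg b u j.succ + p j.castSucc) *
            Gammaℝ (σ - snocNeg b u j.succ + (a₀ + p j.succ))) /
          Gammaℝ (-u j + (σ - snocNeg b u j.succ) + p j.castSucc + (a₀ + p j.succ)) =
      Gammaℝ (p j.castSucc - u j) * Gammaℝ (a₀ + p j.succ - u j) *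
        Gammaℝ (σ + p j.castSucc - snocNeg b u j.succ) *
          Gammaℝ (σ + a₀ + p j.succ - snocNeg b u j.succ) /
        Gammaℝ (σ + a₀ + p j.succ + p j.castSucc - snocNeg b u j.succ - u j) := by
    ring_nf
  simp only [hfactor, kernelValue, Finset.prod_mul_distrib, Finset.prod_div_distrib]
  rw [Fin.prod_univ_castSucc fun i => Gammaℝ (p i - snocNeg b u i)]
  simp only [Fin.prod_univ_succ (n := m), snocNeg_castSucc, snocNeg_last, consZero_succ,
    Fin.castSucc_zero, ← Fin.succ_castSucc, consZero_zero, add_zero, sub_zero, sub_neg_eq_add]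
  field_simp

lemma Gammaℝ_mul_kernelValue :
    Gammaℝ (σ + a₀) * kernelValue σ a₀ b p u =
      Gammaℝ (σ + consZero p (Fin.last (m + 1)) + (a₀ + b)) *
        ∏ i, Gammaℝ (-snocNeg b u i + p i) *
          Gammaℝ (-snocNeg b u i + (σ + consZero p i.castSucc)) *
          (Gammaℝ (a₀ - consZero u i + p i) *
            Gammaℝ (a₀ - consZero u i + (σ + consZero p i.castSucc))) /
          Gammaℝ (-snocNeg b u i + (a₀ - consZero u i) + p i + (σ + consZero p i.castSucc)) := by
  have hshift : Gammaℝ (σ + consZero p (Fin.last (m + 1)) + (a₀ + b)) *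
      ∏ i : Fin (m + 1), Gammaℝ (a₀ - consZero u i + (σ + consZero p i.castSucc)) =
      Gammaℝ (σ + a₀) * ∏ i : Fin (m + 1), Gammaℝ (σ + a₀ + p i - snocNeg b u i) := by
    rw [Fin.prod_univ_succ, Fin.prod_univ_castSucc (fun i => Gammaℝ (σ + a₀ + p i - _)),
      ← Fin.succ_last]
    simp only [snocNeg_castSucc, snocNeg_last, consZero_succ, consZero_zero, Fin.castSucc_zero,
      ← Fin.succ_castSucc, sub_zero]
    have hcomm (j : Fin m) : a₀ - u j + (σ + p j.castSucc) = σ + a₀ + p j.castSucc - u j := by ring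
    simp only [hcomm]
    ring_nf
  have hfactor (i : Fin (m + 1)) : Gammaℝ (-snocNeg b u i + p i) *
      Gammaℝ (-snocNeg b u i + (σ + consZero p i.castSucc)) *
        (Gammaℝ (a₀ - consZero u i + p i) *
          Gammaℝ (a₀ - consZero u i + (σ + consZero p i.castSucc))) /
        Gammaℝ (-snocNeg b u i + (a₀ - consZero u i) + p i + (σ + consZero p i.castSucc)) =
      Gammaℝ (p i - snocNeg b u i) * Gammaℝ (σ + consZero p i.castSucc - snocNeg b u i) *
        Gammaℝ (a₀ + p i - consZero u i) /
          Gammaℝ (σ + a₀ + p i + consZero p i.castSucc - snocNeg b u i - consZero u i) *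
        Gammaℝ (a₀ - consZero u i + (σ + consZero p i.castSucc)) := by
    ring_nf
  simp only [hfactor, kernelValue, mul_div_right_comm _ (Gammaℝ (σ + a₀ + _ - _))]
  rw [Finset.prod_mul_distrib, Finset.prod_mul_distrib, mul_left_comm, ← hshift]
  ring

lemma integral_recKernel_mul_reproKernel {ζ : ℝ} (hζ : 0 < ζ) (hζσ : ζ < σ.re) (ha₀ : 0 ≤ a₀.re)
    (hp : ∀ i, ζ < (p i).re) (hu : ∀ i, (snocNeg b u i).re < ζ) :
    ∫ η, recKernel a₀ b p (vertPt (fun _ => ζ) η) * reproKernel σ b (vertPt (fun _ => ζ) η) u =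
      (4 * π) ^ m * kernelValue σ a₀ b p u := by
  have hΓ : Gammaℝ (σ + a₀ + p 0 - snocNeg b u 0) ≠ 0 := Gammaℝ_ne_zero_of_re_pos (by
    simp only [sub_re, add_re]; linarith [hp 0, hu 0])
  have hbarnes := integral_prod_Gammaℝ_barnes (c := fun _ => ζ) (α := -u)
    (β := fun j => σ - snocNeg b u j.succ) (γ := fun j => p j.castSucc)
    (δ := fun j => a₀ + p j.succ)
    (fun j => by simpa [snocNeg_castSucc] using hu j.castSucc)
    (fun j => by rw [sub_re]; linarith [hu j.succ]) (fun j => hp _)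
    (fun j => by rw [add_re]; linarith [hp j.succ])
  simp only [Pi.neg_apply, Fintype.card_fin] at hbarnes
  rw [kernelValue_eq_prod_succ hΓ, mul_left_comm, ← hbarnes, ← integral_const_mul]
  congr 1; ext η
  rw [recKernel_eq_prod, reproKernel_eq_prod_succ]
  simp only [Finset.prod_mul_distrib, neg_add_eq_sub, sub_add_eq_add_sub]
  ring

lemma integral_reproKernel_mul_recKernel {c : Fin (m + 1) → ℝ} (hcp : ∀ i, c i < (p i).re)
    (hcσ : ∀ i, c i < (σ + consZero p i.castSucc).re) (hb : ∀ i, (snocNeg b u i).re < c i)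
    (ha₀ : ∀ i, (consZero u i).re < a₀.re + c i) :
    ∫ ω, reproKernel σ (a₀ + b) p (vertPt c ω) * recKernel a₀ b (vertPt c ω) u =
      (4 * π) ^ (m + 1) * (Gammaℝ (σ + a₀) * kernelValue σ a₀ b p u) := by
  have hbarnes := integral_prod_Gammaℝ_barnes (c := c) (α := -snocNeg b u)
    (β := fun i => a₀ - consZero u i) (γ := p) (δ := fun i => σ + consZero p i.castSucc)
    (fun i => by simpa using hb i) (fun i => by rw [sub_re]; linarith [ha₀ i]) hcp hcσ
  simp only [Pi.neg_apply, Fintype.card_fin] at hbarnes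
  rw [Gammaℝ_mul_kernelValue, mul_left_comm, ← hbarnes, ← integral_const_mul]
  congr 1; ext ω
  rw [reproKernel_eq_prod_castSucc, recKernel]
  simp only [Finset.prod_mul_distrib, neg_add_eq_sub, sub_add_eq_add_sub]
  ring

end ReproducingKernel

section Integrability

variable {ι κ : Type*} [Fintype ι] [Fintype κ]

lemma memLp_top_prod_Gammaℝ_comp {X : Type*} [TopologicalSpace X] [MeasurableSpace X]
    [OpensMeasurableSpace X] {μ : Measure X} {f : X → ι → ℂ} (hf : Continuous f) {r : ι → ℝ}
    (hr : ∀ j, 0 < r j) (hre : ∀ x j, (f x j).re = r j) :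
    MemLp (fun x => ∏ j, Gammaℝ (f x j)) ⊤ μ := by
  simpa using MemLp.prod' (p := fun _ => ⊤) fun j (_ : j ∈ Finset.univ) =>
    memLp_top_Gammaℝ_comp (μ := μ) ((continuous_apply j).comp hf) (hr j) (hre · j)

lemma integrable_prod_Gammaℝ_sub_mul_prod_Gammaℝ_sub (e : κ → ι) {γ : ι → ℂ} {c : ι → ℝ}
    {d : κ → ℝ} (hγ : ∀ i, c i < (γ i).re) (hd : ∀ j, d j < c (e j)) :
    Integrable (fun p : (ι → ℝ) × (κ → ℝ) => (∏ i, Gammaℝ (γ i - vertPt c p.1 i)) *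
      ∏ j, Gammaℝ (vertPt c p.1 (e j) - vertPt d p.2 j)) (volume.prod volume) := by
  have hshear : MeasurePreserving
      (fun p : (ι → ℝ) × (κ → ℝ) => (p.1, (fun j => p.1 (e j)) - p.2))
      (volume.prod volume) (volume.prod volume) :=
    (MeasurePreserving.id volume).skew_product
      (g := fun (x : ι → ℝ) (y : κ → ℝ) => (fun j => x (e j)) - y) (by fun_prop)
      (.of_forall fun x => (Measure.measurePreserving_sub_left volume _).map_eq)
  have hx : Integrable fun x : ι → ℝ => ∏ i, Gammaℝ (γ i - vertPt c x i) :=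
    Integrable.fintype_prod fun i => integrable_Gammaℝ_sub_vertical (hγ i)
  have hy : Integrable fun y : κ → ℝ => ∏ j, Gammaℝ ((c (e j) - d j : ℝ) + y j * I) :=
    Integrable.fintype_prod (f := fun j (t : ℝ) => Gammaℝ ((c (e j) - d j : ℝ) + t * I)) fun j =>
      integrable_Gammaℝ_vertical (by simpa using hd j)
  refine (hshear.integrable_comp_of_integrable (hx.mul_prod hy)).congr (.of_forall fun p => ?_)
  simp only [Function.comp_apply, vertPt, Pi.sub_apply]
  congr! 3
  push_cast; ring

end Integrability

section ReproducingFormula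

variable {m : ℕ} {σ a₀ b : ℂ}

lemma snocNeg_vertPt_re (b : ℂ) (d y : Fin m → ℝ) (i : Fin (m + 1)) :
    (snocNeg b (vertPt d y) i).re = (snocNeg b (fun j => (d j : ℂ)) i).re := by
  induction i using Fin.lastCases <;> simp [snocNeg_last, snocNeg_castSucc, vertPt_re]

lemma consZero_vertPt_re (d y : Fin m → ℝ) (i : Fin (m + 1)) :
    (consZero (vertPt d y) i).re = (consZero (fun j => (d j : ℂ)) i).re := by
  induction i using Fin.cases <;> simp [consZero_zero, consZero_succ, vertPt_re]

lemma snocNeg_const_re_le {r : ℝ} (hr : 0 ≤ r) (hb : 0 ≤ b.re) (i : Fin (m + 1)) :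
    (snocNeg b (fun _ => (r : ℂ)) i).re ≤ r := by
  induction i using Fin.lastCases with
  | last => rw [snocNeg_last, neg_re]; linarith
  | cast j => rw [snocNeg_castSucc, ofReal_re]

lemma consZero_const_re_le {r : ℝ} (hr : 0 ≤ r) (i : Fin (m + 1)) :
    (consZero (fun _ => (r : ℂ)) i).re ≤ r := by
  induction i using Fin.cases with
  | zero => simpa [consZero_zero] using hr
  | succ j => rw [consZero_succ, ofReal_re]

lemma consZero_re_nonneg {z : Fin m → ℂ} (hz : ∀ j, 0 ≤ (z j).re) (i : Fin (m + 1)) :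
    0 ≤ (consZero z i).re := by
  induction i using Fin.cases with
  | zero => simp [consZero_zero]
  | succ j => simpa [consZero_succ] using hz j

variable {f : (Fin m → ℝ) → ℂ} {p : Fin (m + 1) → ℂ} {ε : ℝ}

lemma integrable_laplacePi_mul_recKernel_mul_reproKernel {ζ : ℝ} (hε : 0 < ε)
    (hf : Integrable fun x => f x * expSum (fun _ => (ε : ℂ)) x) (ha₀ : 0 ≤ a₀.re)
    (hb : 0 ≤ b.re) (hεζ : ε < ζ) (hζσ : ζ < σ.re) (hp : ∀ i, ζ < (p i).re) :
    Integrable (fun q : (Fin m → ℝ) × (Fin m → ℝ) => laplacePi f (vertPt (fun _ => ε) q.2) *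
      (recKernel a₀ b p (vertPt (fun _ => ζ) q.1) *
        reproKernel σ b (vertPt (fun _ => ζ) q.1) (vertPt (fun _ => ε) q.2)))
      (volume.prod volume) := by
  have hζ : 0 < ζ := hε.trans hεζ
  have hΓ := integrable_prod_Gammaℝ_sub_mul_prod_Gammaℝ_sub (c := fun _ => ζ) (d := fun _ => ε)
    (id : Fin m → Fin m) (fun j => hp j.castSucc) (fun _ => hεζ)
  have hL := memLp_top_laplacePi_vertPt (μ := volume.prod volume) hf
    (continuous_snd (X := Fin m → ℝ))
  have hz : Continuous fun q : (Fin m → ℝ) × (Fin m → ℝ) => vertPt (fun _ => ζ) q.1 :=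
    (continuous_vertPt _).comp continuous_fst
  have hu : Continuous fun q : (Fin m → ℝ) × (Fin m → ℝ) => vertPt (fun _ => ε) q.2 :=
    (continuous_vertPt _).comp continuous_snd
  have hrec := memLp_top_prod_Gammaℝ_comp (μ := volume.prod volume)
    (f := fun (q : (Fin m → ℝ) × (Fin m → ℝ)) i => a₀ + p i - consZero (vertPt (fun _ => ζ) q.1) i)
    (continuous_const.sub (continuous_consZero.comp hz))
    (r := fun i => (a₀ + p i - consZero (fun _ => (ζ : ℂ)) i).re)
    (fun i => by
      rw [sub_re, add_re]; linarith [hp i, consZero_const_re_le hζ.le i])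
    fun q i => by simp only [sub_re, consZero_vertPt_re]
  have hrepro := memLp_top_prod_Gammaℝ_comp (μ := volume.prod volume)
    (f := fun (q : (Fin m → ℝ) × (Fin m → ℝ)) i => σ + consZero (vertPt (fun _ => ζ) q.1) i -
      snocNeg b (vertPt (fun _ => ε) q.2) i)
    ((continuous_const.add (continuous_consZero.comp hz)).sub ((continuous_snocNeg b).comp hu))
    (r := fun i => (σ + consZero (fun _ => (ζ : ℂ)) i - snocNeg b (fun _ => (ε : ℂ)) i).re)
    (fun i => by
      rw [sub_re, add_re]
      linarith [snocNeg_const_re_le hε.le hb i,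
        consZero_re_nonneg (z := fun _ => (ζ : ℂ)) (fun _ => by simpa using hζ.le) i])
    fun q i => by simp only [sub_re, add_re, consZero_vertPt_re, snocNeg_vertPt_re]
  refine ((((hΓ.mul_of_top_right hrec).mul_of_top_right hrepro).mul_of_top_right hL).const_mul
    (Gammaℝ (p (Fin.last m) + b))).congr (.of_forall fun q => ?_)
  simp only [recKernel_eq_prod_castSucc, reproKernel, id, Pi.mul_apply]
  ring

lemma integrable_laplacePi_mul_reproKernel_mul_recKernel {c : Fin (m + 1) → ℝ} (hε : 0 < ε)
    (hf : Integrable fun x => f x * expSum (fun _ => (ε : ℂ)) x) (ha₀ : 0 ≤ a₀.re)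
    (hb : 0 ≤ b.re) (hεc : ∀ i, ε < c i) (hcp : ∀ i, c i < (p i).re)
    (hcσ : ∀ i, c i < (σ + consZero p i.castSucc).re) :
    Integrable (fun q : (Fin (m + 1) → ℝ) × (Fin m → ℝ) =>
      laplacePi f (vertPt (fun _ => ε) q.2) * (reproKernel σ (a₀ + b) p (vertPt c q.1) *
        recKernel a₀ b (vertPt c q.1) (vertPt (fun _ => ε) q.2)))
      (volume.prod volume) := by
  have hc (i : Fin (m + 1)) : 0 < c i := hε.trans (hεc i)
  have hΓ := integrable_prod_Gammaℝ_sub_mul_prod_Gammaℝ_sub (d := fun _ => ε)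
    (Fin.castSucc : Fin m → Fin (m + 1)) hcp (fun j => hεc j.castSucc)
  have hL := memLp_top_laplacePi_vertPt (μ := volume.prod volume) hf
    (continuous_snd (X := Fin (m + 1) → ℝ))
  have hw : Continuous fun q : (Fin (m + 1) → ℝ) × (Fin m → ℝ) => vertPt c q.1 :=
    (continuous_vertPt _).comp continuous_fst
  have hu : Continuous fun q : (Fin (m + 1) → ℝ) × (Fin m → ℝ) => vertPt (fun _ => ε) q.2 :=
    (continuous_vertPt _).comp continuous_snd
  have hrepro := memLp_top_prod_Gammaℝ_comp (μ := volume.prod volume)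
    (f := fun (q : (Fin (m + 1) → ℝ) × (Fin m → ℝ)) j =>
      σ + consZero p j.castSucc - vertPt c q.1 j)
    (by fun_prop) (r := fun j => (σ + consZero p j.castSucc).re - c j)
    (fun j => sub_pos.2 (hcσ j)) fun q j => by rw [sub_re, vertPt_re]
  have hlast := memLp_top_Gammaℝ_comp (μ := volume.prod volume)
    (f := fun q : (Fin (m + 1) → ℝ) × (Fin m → ℝ) => vertPt c q.1 (Fin.last m) + b)
    (by fun_prop) (add_pos_of_pos_of_nonneg (hc (Fin.last m)) hb)
    fun q => by rw [add_re, vertPt_re]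
  have hrec := memLp_top_prod_Gammaℝ_comp (μ := volume.prod volume)
    (f := fun (q : (Fin (m + 1) → ℝ) × (Fin m → ℝ)) i =>
      a₀ + vertPt c q.1 i - consZero (vertPt (fun _ => ε) q.2) i)
    ((continuous_const.add hw).sub (continuous_consZero.comp hu))
    (r := fun i => a₀.re + c i - (consZero (fun _ => (ε : ℂ)) i).re)
    (fun i => by linarith [hεc i, consZero_const_re_le hε.le i])
    fun q i => by rw [sub_re, add_re, consZero_vertPt_re, vertPt_re]
  refine (((((hΓ.mul_of_top_right hrepro).mul_of_top_right hlast).mul_of_top_right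
    hrec).mul_of_top_right hL).const_mul
    (Gammaℝ (σ + consZero p (Fin.last (m + 1)) + (a₀ + b)))).congr (.of_forall fun q => ?_)
  simp only [recKernel_eq_prod_castSucc, reproKernel_eq_prod_castSucc, Finset.prod_mul_distrib,
    Pi.mul_apply]
  ring

lemma integral_recKernel_mul_integral_reproKernel {ζ : ℝ} (hε : 0 < ε)
    (hf : Integrable fun x => f x * expSum (fun _ => (ε : ℂ)) x) (ha₀ : 0 ≤ a₀.re)
    (hb : 0 ≤ b.re) (hεζ : ε < ζ) (hζσ : ζ < σ.re) (hp : ∀ i, ζ < (p i).re) :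
    ∫ η, recKernel a₀ b p (vertPt (fun _ => ζ) η) *
        ∫ ξ, laplacePi f (vertPt (fun _ => ε) ξ) *
          reproKernel σ b (vertPt (fun _ => ζ) η) (vertPt (fun _ => ε) ξ) =
      (4 * π) ^ m * ∫ ξ, laplacePi f (vertPt (fun _ => ε) ξ) *
        kernelValue σ a₀ b p (vertPt (fun _ => ε) ξ) := by
  simp only [← integral_const_mul, mul_left_comm (recKernel _ _ _ _)]
  rw [integral_integral_swap (integrable_laplacePi_mul_recKernel_mul_reproKernel hε hf ha₀ hb hεζ
    hζσ hp)]
  congr 1; ext ξ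
  rw [integral_const_mul, integral_recKernel_mul_reproKernel (hε.trans hεζ) hζσ ha₀ hp fun i => ?_,
    mul_left_comm]
  rw [snocNeg_vertPt_re]
  exact (snocNeg_const_re_le hε.le hb i).trans_lt hεζ

lemma integral_reproKernel_mul_integral_recKernel {c : Fin (m + 1) → ℝ} (hε : 0 < ε)
    (hf : Integrable fun x => f x * expSum (fun _ => (ε : ℂ)) x) (ha₀ : 0 ≤ a₀.re)
    (hb : 0 ≤ b.re) (hεc : ∀ i, ε < c i) (hcp : ∀ i, c i < (p i).re)
    (hcσ : ∀ i, c i < (σ + consZero p i.castSucc).re) :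
    ∫ ω, reproKernel σ (a₀ + b) p (vertPt c ω) *
        ∫ ξ, laplacePi f (vertPt (fun _ => ε) ξ) *
          recKernel a₀ b (vertPt c ω) (vertPt (fun _ => ε) ξ) =
      (4 * π) ^ (m + 1) * (Gammaℝ (σ + a₀) * ∫ ξ, laplacePi f (vertPt (fun _ => ε) ξ) *
        kernelValue σ a₀ b p (vertPt (fun _ => ε) ξ)) := by
  simp only [← integral_const_mul, mul_left_comm (reproKernel _ _ _ _)]
  rw [integral_integral_swap (integrable_laplacePi_mul_reproKernel_mul_recKernel hε hf ha₀ hb hεc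
    hcp hcσ)]
  congr 1; ext ξ
  rw [integral_const_mul, integral_reproKernel_mul_recKernel hcp hcσ (fun i => ?_) fun i => ?_]
  · ring
  · rw [snocNeg_vertPt_re]
    exact (snocNeg_const_re_le hε.le hb i).trans_lt (hεc i)
  · rw [consZero_vertPt_re]
    linarith [hεc i, consZero_const_re_le hε.le i]

lemma integral_laplacePi_logWhitt_succ_mul_reproKernel {a : ℕ → ℂ}
    (ha : ∀ j < m + 2, 0 ≤ (a j).re) {c : Fin (m + 1) → ℝ} (hε : 0 < ε) (hεc : ∀ i, ε < c i)
    (hcp : ∀ i, c i < (p i).re) (hcσ : ∀ i, c i < (σ + consZero p i.castSucc).re) :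
    2 * (4 * π) ^ m * ∫ ω, laplacePi (logWhitt (m + 1) a) (vertPt c ω) *
        reproKernel σ (sumA (m + 2) a) p (vertPt c ω) =
      (4 * π) ^ (m + 1) * (Gammaℝ (σ + a 0) *
        ∫ ξ, laplacePi (logWhitt m fun j => a (j + 1)) (vertPt (fun _ => ε) ξ) *
          kernelValue σ (a 0) (sumA (m + 1) fun j => a (j + 1)) p (vertPt (fun _ => ε) ξ)) := by
  have ha' : ∀ j < m + 1, 0 ≤ (a (j + 1)).re := fun j hj => ha _ (by lia)
  have hsum : sumA (m + 2) a = a 0 + sumA (m + 1) fun j => a (j + 1) := by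
    rw [sumA, Finset.sum_range_succ', add_comm, sumA]
  rw [← integral_reproKernel_mul_integral_recKernel hε
    (integrable_logWhitt_mul_expSum m ha' fun _ => by simpa using hε) (ha 0 (by lia))
    (sumA_re_nonneg ha') hεc hcp hcσ, ← integral_const_mul, hsum]
  congr 1; ext ω
  rw [← laplacePi_logWhitt_succ m ha hε fun j => by rw [vertPt_re]; exact hεc j]
  ring

theorem integral_laplacePi_logWhitt_mul_reproKernel (m : ℕ) {a : ℕ → ℂ}
    (ha : ∀ j < m + 1, 0 ≤ (a j).re) {p : Fin m → ℂ} {c : Fin m → ℝ} (hc : ∀ j, 0 < c j)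
    (hcp : ∀ j, c j < (p j).re) (hcσ : ∀ j, c j < (σ + consZero p j.castSucc).re) :
    ∫ ξ, laplacePi (logWhitt m a) (vertPt c ξ) *
        reproKernel σ (sumA (m + 1) a) p (vertPt c ξ) =
      (4 * π) ^ m * ((∏ j ∈ Finset.range (m + 1), Gammaℝ (σ + a j)) *
        laplacePi (logWhitt m a) p) := by
  induction m generalizing a with
  | zero =>
    rw [Measure.volume_pi_eq_dirac 0, integral_dirac, Subsingleton.elim p (vertPt c 0)]
    simp [reproKernel_eq_prod_castSucc, consZero_zero, sumA, mul_comm]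
  | succ m ih =>
    have h4π : (4 * π : ℂ) ^ m ≠ 0 := pow_ne_zero m (by simp [Real.pi_ne_zero])
    obtain ⟨ζ, hζ, hζc⟩ := exists_pos_lt hc
    have hε : 0 < ζ / 2 := half_pos hζ
    have hεζ : ζ / 2 < ζ := half_lt_self hζ
    have hζσ : ζ < σ.re := (hζc 0).trans (by simpa [consZero_zero] using hcσ 0)
    have ha' : ∀ j < m + 1, 0 ≤ (a (j + 1)).re := fun j hj => ha _ (by lia)
    have hih (η : Fin m → ℝ) := ih ha' (p := vertPt (fun _ => ζ) η) (c := fun _ => ζ / 2)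
      (fun _ => hε) (fun j => by rwa [vertPt_re]) fun j => by
        rw [add_re]
        linarith [consZero_re_nonneg (z := vertPt (fun _ => ζ) η)
          (fun j => by rw [vertPt_re]; exact hζ.le) j.castSucc]
    have hinner := integral_recKernel_mul_integral_reproKernel hε
      (integrable_logWhitt_mul_expSum m ha' fun _ => by simpa using hζ) (ha 0 (by lia))
      (sumA_re_nonneg ha') hεζ hζσ fun i => (hζc i).trans (hcp i)
    have hkernel : 2 * (4 * π) ^ m * ((∏ j ∈ Finset.range (m + 1), Gammaℝ (σ + a (j + 1))) *
        laplacePi (logWhitt (m + 1) a) p) =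
        ∫ ξ, laplacePi (logWhitt m fun j => a (j + 1)) (vertPt (fun _ => ζ / 2) ξ) *
          kernelValue σ (a 0) (sumA (m + 1) fun j => a (j + 1)) p
            (vertPt (fun _ => ζ / 2) ξ) := by
      refine mul_left_cancel₀ h4π ?_
      rw [← hinner, mul_left_comm (2 * _), laplacePi_logWhitt_succ m ha hζ fun i =>
        (hζc i).trans (hcp i), ← integral_const_mul, ← integral_const_mul]
      congr 1; ext η
      rw [hih]
      ring
    refine mul_left_cancel₀ (mul_ne_zero two_ne_zero h4π) ?_
    rw [integral_laplacePi_logWhitt_succ_mul_reproKernel ha hε (fun i => hεζ.trans (hζc i)) hcp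
      hcσ, ← hkernel, Finset.prod_range_succ' _ (m + 1)]
    ring

end ReproducingFormula

/-! ### Comparison with `WhittAr` and `Ufun` -/

lemma extR_val {k : ℕ} (t : Fin k → ℝ) (j : Fin k) : extR t j = t j := by simp [extR]

lemma hasFDerivAt_pi_exp {k : ℕ} (x : Fin k → ℝ) :
    HasFDerivAt (fun (x : Fin k → ℝ) j => Real.exp (x j))
      (ContinuousLinearMap.pi fun j => (Real.exp (x j) • ContinuousLinearMap.id ℝ ℝ).comp
        (ContinuousLinearMap.proj (R := ℝ) (φ := fun _ : Fin k => ℝ) j)) x := by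
  refine hasFDerivAt_pi.2 fun j => ?_
  have h := (Real.hasDerivAt_exp (x j)).hasFDerivAt.comp x
    (ContinuousLinearMap.proj (R := ℝ) (φ := fun _ : Fin k => ℝ) j).hasFDerivAt
  refine h.congr_fderiv ?_
  ext v
  simp [mul_comm]

lemma range_pi_exp (k : ℕ) : Set.range (fun (x : Fin k → ℝ) j => Real.exp (x j)) = posSet k := by
  ext t
  refine ⟨?_, fun h => ⟨fun j => Real.log (t j), funext fun j => Real.exp_log (h j)⟩⟩
  rintro ⟨x, rfl⟩ j
  exact Real.exp_pos _

lemma setIntegral_posSet_mul_inv_prod {k : ℕ} (F : (Fin k → ℝ) → ℂ) :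
    ∫ t in posSet k, F t * (∏ j ∈ Finset.range k, (extR t j : ℂ))⁻¹ =
      ∫ x : Fin k → ℝ, F fun j => Real.exp (x j) := by
  have hinj : Set.InjOn (fun (x : Fin k → ℝ) j => Real.exp (x j)) Set.univ :=
    fun x _ y _ h => funext fun j => Real.exp_injective (congrFun h j)
  rw [← range_pi_exp, ← Set.image_univ, integral_image_eq_integral_abs_det_fderiv_smul volume
    MeasurableSet.univ (fun x _ => (hasFDerivAt_pi_exp x).hasFDerivWithinAt) hinj, setIntegral_univ]
  congr 1; ext x
  have hpos : 0 < ∏ j, Real.exp (x j) := Finset.prod_pos fun j _ => Real.exp_pos _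
  have hdet : |(ContinuousLinearMap.pi fun j => (Real.exp (x j) • ContinuousLinearMap.id ℝ ℝ).comp
      (ContinuousLinearMap.proj (R := ℝ) (φ := fun _ : Fin k => ℝ) j)).det| =
      ∏ j, Real.exp (x j) := by
    rw [ContinuousLinearMap.det_pi, abs_of_pos] <;> simp [Finset.prod_pos, Real.exp_pos]
  rw [hdet, Finset.prod_range]
  simp only [extR_val]
  rw [← ofReal_prod, real_smul, mul_left_comm, mul_inv_cancel₀ (ofReal_ne_zero.2 hpos.ne'), mul_one]

lemma integral_eq_two_pow_finrank_mul_integral {E : Type*} [NormedAddCommGroup E]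
    [NormedSpace ℝ E] [FiniteDimensional ℝ E] [MeasurableSpace E] [BorelSpace E] (μ : Measure E)
    [μ.IsAddHaarMeasure] (g : E → ℂ) (v : E) :
    ∫ x, g x ∂μ = 2 ^ Module.finrank ℝ E * ∫ x, g (v - (2 : ℝ) • x) ∂μ := by
  rw [Measure.integral_comp_smul μ (fun x => g (v - x)), integral_sub_left_eq_self g μ v,
    abs_of_pos (by positivity), real_smul, ← mul_assoc]
  push_cast
  rw [mul_inv_cancel₀ (pow_ne_zero _ two_ne_zero), one_mul]

lemma BesselK_two_pi_mul_exp (ν : ℂ) (x : ℝ) :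
    BesselK ν (2 * π * Real.exp x) = gaussConv (-ν) ν x := by
  rw [BesselK, integral_Ioi_eq_integral_exp, integral_eq_two_pow_finrank_mul_integral volume _ x,
    Module.finrank_self, pow_one, ← mul_assoc, one_div_mul_cancel two_ne_zero, one_mul, gaussConv]
  congr 1; ext w
  have hne : (Real.exp (x - (2 : ℝ) • w) : ℂ) ≠ 0 := ofReal_ne_zero.2 (Real.exp_pos _).ne'
  have hexp : (-((2 * π * Real.exp x : ℝ) / 2) * (Real.exp (x - (2 : ℝ) • w) +
      1 / Real.exp (x - (2 : ℝ) • w)) : ℂ) =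
      (-(π * Real.exp (2 * w)) : ℝ) + (-(π * Real.exp (2 * (x - w))) : ℝ) := by
    rw [one_div, ← ofReal_inv, ← Real.exp_neg, mul_sub, sub_eq_add_neg (2 * x), two_mul x,
      Real.exp_add (x + x), Real.exp_add x x, neg_sub, smul_eq_mul, Real.exp_sub, Real.exp_sub,
      Real.exp_neg]
    push_cast
    field_simp
    ring
  rw [real_smul, mul_div_cancel₀ _ hne, ofReal_exp_cpow, hexp, gaussTwist, gaussTwist,
    Complex.exp_add, ofReal_exp, ofReal_exp, mul_mul_mul_comm, ← Complex.exp_add (-ν * w),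
    smul_eq_mul]
  congr 3
  push_cast
  ring

lemma logWhitt_one (a : ℕ → ℂ) (x : Fin 1 → ℝ) :
    logWhitt 1 a x = 2 * gaussConv (a 1) (a 0) (x 0) := by
  have hlast : lastExp 0 (sumA 1 fun j => a (j + 1)) 0 = a 1 := by
    rw [← Fin.last_zero, lastExp_last, sumA, Finset.sum_range_one]
  have h := (volume_preserving_funUnique (Fin 1) ℝ).integral_comp'
    (g := fun w => gaussTwist (a 1) w * gaussTwist (a 0) (x 0 - w))
  rw [logWhitt, pow_one, gaussConv, ← h]
  simp only [shearConv, logWhitt, one_mul, Fin.prod_univ_succ, Fin.prod_univ_zero, mul_one, hlast]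
  rfl

lemma WhittAr_two (a : ℕ → ℂ) {y : ℕ → ℝ} (hy : 0 < y 0) :
    WhittAr 2 a y = logWhitt 1 a fun _ => Real.log (y 0) := by
  obtain ⟨x, hx⟩ : ∃ x, Real.exp x = y 0 := ⟨_, Real.exp_log hy⟩
  rw [WhittAr, logWhitt_one, ← hx, Real.log_exp, ofReal_exp_cpow, BesselK_two_pi_mul_exp, mul_assoc,
    mul_comm (cexp _), gaussConv_mul_cexp]
  ring_nf

lemma expSum_shear {m : ℕ} (s : Fin m → ℂ) (w x : Fin (m + 1) → ℝ) :
    expSum s (fun j => w j.castSucc + (x j.succ - w j.succ)) =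
      expSum (snocNeg 0 s) w * expSum (consZero s) (x - w) := by
  simp only [expSum, ← Complex.exp_add]
  rw [Fin.sum_univ_castSucc, Fin.sum_univ_succ]
  simp only [snocNeg_castSucc, snocNeg_last, consZero_succ, consZero_zero, neg_zero, zero_mul,
    add_zero, zero_add, ← Finset.sum_add_distrib, Pi.sub_apply, ofReal_add, mul_add]

lemma shearConv_expSum_mul {m : ℕ} (s : Fin m → ℂ) (f : (Fin m → ℝ) → ℂ) (α β : Fin (m + 1) → ℂ) :
    shearConv (fun u => expSum s u * f u) α β =
      shearConv f (α + snocNeg 0 s) (β + consZero s) := by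
  ext x
  simp only [shearConv]
  congr 1; ext w
  have hβ := prod_gaussTwist_mul_expSum β (consZero s) (x - w)
  simp only [Pi.sub_apply] at hβ
  rw [expSum_shear, ← prod_gaussTwist_mul_expSum α, ← hβ]
  ring

lemma logWhitt_add_const (m : ℕ) (a : ℕ → ℂ) (c : ℂ) :
    logWhitt m (fun j => a j + c) =
      fun x : Fin m → ℝ => expSum (fun j : Fin m => ((j : ℂ) + 1) * c) x * logWhitt m a x := by
  induction m generalizing a with
  | zero => ext x; simp [logWhitt, expSum]
  | succ m ih =>
    have hα : lastExp m (sumA (m + 1) fun j => a (j + 1) + c) +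
          snocNeg 0 (fun j : Fin m => ((j : ℂ) + 1) * c) =
        lastExp m (sumA (m + 1) fun j => a (j + 1)) + fun j : Fin (m + 1) => ((j : ℂ) + 1) * c := by
      funext j
      induction j using Fin.lastCases with
      | last => simp [lastExp_last, snocNeg_last, sumA, Finset.sum_add_distrib]
      | cast j => simp [lastExp_castSucc, snocNeg_castSucc]
    have hβ : (fun _ => a 0 + c) + consZero (fun j : Fin m => ((j : ℂ) + 1) * c) =
        (fun _ => a 0) + fun j : Fin (m + 1) => ((j : ℂ) + 1) * c := by
      funext j
      induction j using Fin.cases with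
      | zero => simp [consZero_zero]
      | succ j =>
        simp only [Pi.add_apply, consZero_succ, Fin.val_succ, Nat.cast_add, Nat.cast_one]
        ring
    ext x
    rw [logWhitt, logWhitt, ih fun j => a (j + 1), shearConv_expSum_mul, hα, hβ,
      mul_left_comm, mul_comm (expSum _ _), shearConv_mul_expSum]

/-- The substitution `t = e^{-2w}/π` in the recursion for the Whittaker function: it turns the
exponential weights of `WhittAr` into `gaussTwist`. -/
def expSubst (w : ℝ) : ℝ := Real.exp (-Real.log π - 2 * w)

lemma expSubst_pos (w : ℝ) : 0 < expSubst w := Real.exp_pos _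

lemma pi_mul_expSubst (w : ℝ) : π * expSubst w = Real.exp (-2 * w) := by
  rw [expSubst, sub_eq_add_neg, Real.exp_add, Real.exp_neg, Real.exp_log Real.pi_pos,
    mul_inv_cancel_left₀ Real.pi_ne_zero, neg_mul]

lemma log_exp_mul_sqrt_expSubst_div (x u v : ℝ) :
    Real.log (Real.exp x * √(expSubst v / expSubst u)) = u + (x - v) := by
  have hdiv : 0 < expSubst v / expSubst u := div_pos (expSubst_pos v) (expSubst_pos u)
  rw [Real.log_mul (Real.exp_pos x).ne' (Real.sqrt_pos.2 hdiv).ne', Real.log_sqrt hdiv.le,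
    Real.log_div (expSubst_pos v).ne' (expSubst_pos u).ne', expSubst, expSubst]
  simp only [Real.log_exp]
  ring

lemma whittaker_weight_expSubst (x w : ℝ) (e e' : ℂ) :
    cexp ((-(π * Real.exp x) ^ 2 * expSubst w - 1 / expSubst w : ℝ) : ℂ) *
        ((π * Real.exp x : ℝ) : ℂ) ^ e * (expSubst w : ℂ) ^ e' =
      cexp ((e - e') * Real.log π) * (gaussTwist (e - 2 * e') w * gaussTwist e (x - w)) := by
  have hinv : 1 / expSubst w = π * Real.exp (2 * w) := by
    rw [one_div, inv_eq_iff_eq_inv, mul_inv, ← Real.exp_neg, ← neg_mul, ← pi_mul_expSubst,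
      inv_mul_cancel_left₀ Real.pi_ne_zero]
  have hmul : (π * Real.exp x) ^ 2 * expSubst w = π * Real.exp (2 * (x - w)) := by
    calc (π * Real.exp x) ^ 2 * expSubst w
        = π * (Real.exp x * Real.exp x * (π * expSubst w)) := by ring
      _ = π * Real.exp (2 * (x - w)) := by
        rw [pi_mul_expSubst, ← Real.exp_add, ← Real.exp_add]; ring_nf
  have hweight : -(π * Real.exp x) ^ 2 * expSubst w - 1 / expSubst w =
      -(π * Real.exp (2 * w)) + -(π * Real.exp (2 * (x - w))) := by
    rw [neg_mul, hmul, hinv]; ring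
  have hbase : π * Real.exp x = Real.exp (Real.log π + x) := by
    rw [Real.exp_add, Real.exp_log Real.pi_pos]
  rw [hweight, hbase, expSubst, ofReal_exp_cpow, ofReal_exp_cpow, ofReal_add, Complex.exp_add,
    gaussTwist, gaussTwist, mul_mul_mul_comm _ (cexp _), ofReal_exp, ofReal_exp, mul_left_comm,
    mul_assoc (_ * _)]
  simp only [← Complex.exp_add]
  congr 2
  push_cast
  ring

lemma sum_range_whittaker_exponent (N : ℕ) (a₀ : ℂ) :
    ∑ j ∈ Finset.range N, (((N - j : ℕ) : ℂ) * a₀ / N - ((N + 1 : ℕ) : ℂ) * a₀ / (2 * N)) = 0 := by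
  rcases eq_or_ne N 0 with rfl | hN
  · simp
  have hgauss : (∑ j ∈ Finset.range N, ((N - j : ℕ) : ℂ)) * 2 = N * (N + 1) := by
    have h := Finset.sum_range_id_mul_two (N + 1)
    rw [← Finset.sum_range_reflect, Finset.sum_range_succ] at h
    simp only [Nat.add_sub_cancel, Nat.sub_self, add_zero] at h
    rw [mul_comm (N : ℂ)]
    exact_mod_cast h
  have hN' : (N : ℂ) ≠ 0 := Nat.cast_ne_zero.2 hN
  rw [Finset.sum_sub_distrib, ← Finset.sum_div, ← Finset.sum_mul, Finset.sum_const,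
    Finset.card_range, nsmul_eq_mul]
  push_cast
  field_simp
  linear_combination a₀ * hgauss

lemma prod_whittaker_weight (N : ℕ) [NeZero N] (a₀ : ℂ) (x w : Fin N → ℝ) :
    ∏ j : Fin N, cexp ((-(π * Real.exp (x j)) ^ 2 * expSubst (w j) - 1 / expSubst (w j) : ℝ) : ℂ) *
        ((π * Real.exp (x j) : ℝ) : ℂ) ^ (((N - j : ℕ) : ℂ) * a₀ / (N : ℂ)) *
        (expSubst (w j) : ℂ) ^ (((N + 1 : ℕ) : ℂ) * a₀ / (2 * (N : ℂ))) =
      (∏ j : Fin N, gaussTwist (-((j + 1) * (a₀ / N))) (w j)) *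
        ∏ j : Fin N, gaussTwist (a₀ - j * (a₀ / N)) (x j - w j) := by
  have hN : (N : ℂ) ≠ 0 := Nat.cast_ne_zero.2 (NeZero.ne N)
  have hcast (j : Fin N) : ((N - j : ℕ) : ℂ) = N - j := Nat.cast_sub j.2.le
  have hβ (j : Fin N) : ((N - j : ℕ) : ℂ) * a₀ / N = a₀ - j * (a₀ / N) := by
    rw [hcast]; field_simp
  have hα (j : Fin N) : ((N - j : ℕ) : ℂ) * a₀ / N - 2 * (((N + 1 : ℕ) : ℂ) * a₀ / (2 * N)) =
      -((j + 1) * (a₀ / N)) := by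
    rw [hcast]; push_cast; field_simp; ring
  have hsum := sum_range_whittaker_exponent N a₀
  rw [Finset.sum_range] at hsum
  simp only [whittaker_weight_expSubst, Finset.prod_mul_distrib]
  rw [← Complex.exp_sum, ← Finset.sum_mul, hsum, zero_mul, Complex.exp_zero, one_mul]
  simp only [hα]
  simp only [hβ]

lemma cpow_pi_mul_expSubst {n : ℕ} (b : ℂ) (w : Fin (n + 1) → ℝ) :
    ((π * expSubst (w (Fin.last n)) : ℝ) : ℂ) ^ (-b / 2) = expSum (lastExp n b) w := by
  rw [pi_mul_expSubst, ofReal_exp_cpow, expSum, Fin.sum_univ_castSucc, lastExp_last]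
  simp only [lastExp_castSucc, zero_mul, Finset.sum_const_zero, zero_add]
  push_cast
  ring_nf

lemma WhittAr_add_three (n : ℕ) (a : ℕ → ℂ) {y : ℕ → ℝ} {x : Fin (n + 2) → ℝ}
    (hy : ∀ j : Fin (n + 2), y j = Real.exp (x j)) :
    WhittAr (n + 3) a y = 2 ^ (n + 2) * ∫ w : Fin (n + 2) → ℝ,
      WhittAr (n + 2) (tildeA (n + 3) a) (fun j => y (j + 1) *
        √(extR (fun i => expSubst (w i)) (j + 1) / extR (fun i => expSubst (w i)) j)) *
      ((∏ j : Fin (n + 2), gaussTwist (-((j + 1) * (a 0 / (n + 2 : ℕ))) +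
          lastExp (n + 1) (sumA (n + 3) a) j) (w j)) *
        ∏ j : Fin (n + 2), gaussTwist (a 0 - j * (a 0 / (n + 2 : ℕ))) (x j - w j)) := by
  have hlast (t : Fin (n + 2) → ℝ) : extR t (n + 1) = t (Fin.last _) := extR_val t (Fin.last _)
  have hprod (w : Fin (n + 2) → ℝ) := prod_whittaker_weight (n + 2) (a 0) x w
  have hexp (w : Fin (n + 2) → ℝ) := prod_gaussTwist_mul_expSum
    (fun j : Fin (n + 2) => -(((j : ℂ) + 1) * (a 0 / (n + 2 : ℕ))))
    (lastExp (n + 1) (sumA (n + 3) a)) w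
  simp only [Pi.add_apply] at hexp
  rw [WhittAr, setIntegral_posSet_mul_inv_prod,
    integral_eq_two_pow_finrank_mul_integral volume _ fun _ => -Real.log π, Module.finrank_fin_fun]
  congr 2
  ext w
  have hsubst : (fun j => Real.exp (((fun _ => -Real.log π) - (2 : ℝ) • w : Fin (n + 2) → ℝ) j)) =
      fun j => expSubst (w j) := rfl
  rw [hsubst, hlast, cpow_pi_mul_expSubst, Finset.prod_range]
  simp only [extR_val, hy]
  rw [hprod, ← hexp]
  ring

lemma shearConv_logWhitt_tildeA (m : ℕ) (a : ℕ → ℂ) :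
    shearConv (logWhitt m (tildeA (m + 2) a))
        (fun j => -((j + 1) * (a 0 / (m + 1 : ℕ))) + lastExp m (sumA (m + 2) a) j)
        (fun j => a 0 - j * (a 0 / (m + 1 : ℕ))) =
      shearConv (logWhitt m fun j => a (j + 1)) (lastExp m (sumA (m + 1) fun j => a (j + 1)))
        (fun _ => a 0) := by
  have htilde : tildeA (m + 2) a = fun j => a (j + 1) + a 0 / (m + 1 : ℕ) := by
    funext j; simp only [tildeA]; congr 2; push_cast; ring
  rw [htilde, logWhitt_add_const m fun j => a (j + 1), shearConv_expSum_mul]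
  congr 1
  · funext j
    induction j using Fin.lastCases with
    | last =>
      have hm : ((m : ℂ) + 1) ≠ 0 := by exact_mod_cast m.succ_ne_zero
      simp only [Pi.add_apply, lastExp_last, snocNeg_last, Fin.val_last, sumA,
        Finset.sum_range_succ' _ (m + 1)]
      push_cast
      field_simp
      ring
    | cast j => simp [lastExp_castSucc, snocNeg_castSucc]
  · funext j
    induction j using Fin.cases with
    | zero => simp [consZero_zero]
    | succ j => simp [consZero_succ]

lemma WhittAr_eq_logWhitt (m : ℕ) (a : ℕ → ℂ) {y : ℕ → ℝ} (hy : ∀ j < m, 0 < y j) :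
    WhittAr (m + 1) a y = logWhitt m a fun j => Real.log (y j) := by
  induction m generalizing a y with
  | zero => rfl
  | succ m ih =>
    obtain _ | n := m
    · rw [WhittAr_two a (hy 0 one_pos)]
      congr 1; ext j; rw [Subsingleton.elim j 0]; rfl
    set x : Fin (n + 2) → ℝ := fun j => Real.log (y j)
    have hyx (j : Fin (n + 2)) : y j = Real.exp (x j) := (Real.exp_log (hy j j.2)).symm
    have hshift (w : Fin (n + 2) → ℝ) (j : Fin (n + 1)) : y (j + 1) *
        √(extR (fun i => expSubst (w i)) (j + 1) / extR (fun i => expSubst (w i)) j) =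
        Real.exp (x j.succ) * √(expSubst (w j.succ) / expSubst (w j.castSucc)) := by
      rw [← hyx j.succ, ← extR_val (fun i => expSubst (w i)) j.succ,
        ← extR_val (fun i => expSubst (w i)) j.castSucc, Fin.val_succ, Fin.val_castSucc]
    have hpos (w : Fin (n + 2) → ℝ) (j : ℕ) (hj : j < n + 1) : 0 < y (j + 1) *
        √(extR (fun i => expSubst (w i)) (j + 1) / extR (fun i => expSubst (w i)) j) := by
      rw [hshift w ⟨j, hj⟩]
      exact mul_pos (Real.exp_pos _)
        (Real.sqrt_pos.2 (div_pos (expSubst_pos _) (expSubst_pos _)))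
    rw [WhittAr_add_three n a hyx, logWhitt, ← shearConv_logWhitt_tildeA]
    simp only [shearConv]
    congr 2
    ext w
    rw [ih _ (hpos w)]
    simp only [hshift, log_exp_mul_sqrt_expSubst_div]

lemma Ufun_succ (m : ℕ) (a s : ℕ → ℂ) :
    Ufun (m + 1) a s = laplacePi (logWhitt m a) fun j => s j := by
  have hchange := setIntegral_posSet_mul_inv_prod fun y : Fin m → ℝ =>
    WhittAr (m + 1) a (extR y) * ∏ j ∈ Finset.range m, (extR y j : ℂ) ^ s j
  simp only [← div_eq_mul_inv, mul_div_assoc, ← Finset.prod_div_distrib] at hchange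
  rw [Ufun, laplacePi, Nat.add_sub_cancel, hchange]
  congr 1
  ext x
  have hpos (j : ℕ) (hj : j < m) : 0 < extR (fun j => Real.exp (x j)) j := by
    rw [extR_val (fun j => Real.exp (x j)) ⟨j, hj⟩]
    exact Real.exp_pos _
  rw [WhittAr_eq_logWhitt m a hpos, expSum_eq_prod, Finset.prod_range]
  simp only [extR_val, Real.log_exp, ofReal_exp_cpow]

lemma Pext_succ (p : ℕ → ℂ) (j : ℕ) : Pext p (j + 1) = p j := by simp [Pext]

lemma Pext_eq_consZero {m : ℕ} (p : ℕ → ℂ) (j : Fin (m + 1)) :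
    Pext p j = consZero (fun i : Fin m => p i) j := by
  induction j using Fin.cases with
  | zero => rfl
  | succ j => rw [Fin.val_succ, Pext_succ, consZero_succ]

lemma Gammaℝ_mul_prod_Icc_eq_reproKernel (m : ℕ) (σ b : ℂ) (p q : ℕ → ℂ) :
    Gammaℝ (p m + σ + b) * ∏ j ∈ Finset.Icc 1 (m + 1), Gammaℝ (Pext p j - q (j - 1)) *
        Gammaℝ (Pext p (j - 1) - q (j - 1) + σ) =
      reproKernel σ b (fun j : Fin (m + 1) => p j) (fun j => q j) := by
  have hlast := Pext_eq_consZero p (Fin.last (m + 1))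
  have hcons (j : Fin (m + 1)) := Pext_eq_consZero p j.castSucc
  rw [Fin.val_last, Pext_succ] at hlast
  rw [reproKernel_eq_prod_castSucc, ← hlast, add_comm (p m),
    ← Finset.Ico_add_one_right_eq_Icc, Finset.prod_Ico_eq_prod_range, Nat.add_sub_cancel,
    Finset.prod_range]
  simp only [add_comm 1 (_ : ℕ), Nat.add_sub_cancel, Pext_succ, ← hcons, Fin.val_castSucc,
    add_comm σ, sub_add_eq_add_sub]

lemma Gammaℝ_mul_VIntK_Ufun (m : ℕ) (a : ℕ → ℂ) (σ b : ℂ) (p : ℕ → ℂ) (c : ℕ → ℝ) :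
    Gammaℝ (p m + σ + b) * VIntK (m + 1) c (fun q => Ufun (m + 2) a q *
        ∏ j ∈ Finset.Icc 1 (m + 1), Gammaℝ (Pext p j - q (j - 1)) *
          Gammaℝ (Pext p (j - 1) - q (j - 1) + σ)) =
      I ^ (m + 1) * ∫ ξ, laplacePi (logWhitt (m + 1) a) (vertPt (fun j => c j) ξ) *
        reproKernel σ b (fun j => p j) (vertPt (fun j => c j) ξ) := by
  have hvert (ξ : Fin (m + 1) → ℝ) :
      vertPt (fun j : Fin (m + 1) => c j) ξ =
        fun j : Fin (m + 1) => (c j : ℂ) + (extR0 ξ j : ℝ) * I := by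
    ext j; simp [vertPt, extR0, j.2]
  rw [VIntK, mul_left_comm, ← integral_const_mul]
  congr 2
  ext ξ
  rw [hvert, Ufun_succ, mul_left_comm]
  exact congrArg _ (Gammaℝ_mul_prod_Icc_eq_reproKernel m σ b p fun i => c i + extR0 ξ i * I)

theorem U_barnes_identity_one_general (n : ℕ) (hn : 2 ≤ n) (a : ℕ → ℂ)
    (ha : ∀ j < n, 0 ≤ (a j).re) (σ : ℂ) (p : ℕ → ℂ) (c : ℕ → ℝ) (hc : ∀ i < n - 1, 0 < c i)
    (hΓ : ∀ j, 1 ≤ j → j ≤ n - 1 →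
      0 < (Pext p j - (c (j - 1) : ℂ)).re ∧
      0 < (Pext p (j - 1) - (c (j - 1) : ℂ) + σ).re) :
    Ufun n a p =
      GammaR (p (n - 2) + σ + sumA n a) / (∏ j ∈ Finset.range n, GammaR (σ + a j)) *
        (((4 * (π : ℂ) * I) ^ (n - 1))⁻¹ *
          VIntK (n - 1) c (fun q =>
            Ufun n a q *
              ∏ j ∈ Finset.Icc 1 (n - 1),
                GammaR (Pext p j - q (j - 1)) *
                  GammaR (Pext p (j - 1) - q (j - 1) + σ))) := by
  obtain ⟨m, rfl⟩ := Nat.exists_eq_add_of_le' hn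
  have hΓ₁ (j : Fin (m + 1)) : c j < (p j).re := by
    simpa [Pext_succ] using (hΓ (j + 1) (by lia) (by lia)).1
  have hΓ₂ (j : Fin (m + 1)) : c j < (σ + consZero (fun i => p i) j.castSucc).re := by
    rw [← Pext_eq_consZero, Fin.val_castSucc]
    have h := (hΓ (j + 1) (by lia) (by lia)).2
    simp only [Nat.add_sub_cancel, add_re, sub_re, ofReal_re] at h ⊢
    linarith
  have hσ : 0 < σ.re := by
    simpa [consZero_zero] using (hc 0 (by lia)).trans (hΓ₂ 0)
  have hne : ∏ j ∈ Finset.range (m + 2), Gammaℝ (σ + a j) ≠ 0 :=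
    Finset.prod_ne_zero_iff.2 fun j hj => Gammaℝ_ne_zero_of_re_pos <| by
      rw [add_re]; exact add_pos_of_pos_of_nonneg hσ (ha j (Finset.mem_range.1 hj))
  have hrepro := integral_laplacePi_logWhitt_mul_reproKernel (m + 1) ha
    (p := fun j => p j) (c := fun j => c j) (fun j => hc j j.2) hΓ₁ hΓ₂
  have hV := Gammaℝ_mul_VIntK_Ufun m a σ (sumA (m + 2) a) p c
  rw [hrepro, ← Ufun_succ] at hV
  change Ufun (m + 2) a p = Gammaℝ (p m + σ + sumA (m + 2) a) /
    (∏ j ∈ Finset.range (m + 2), Gammaℝ (σ + a j)) * (((4 * π * I) ^ (m + 1))⁻¹ *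
      VIntK (m + 1) c fun q => Ufun (m + 2) a q * ∏ j ∈ Finset.Icc 1 (m + 1),
        Gammaℝ (Pext p j - q (j - 1)) * Gammaℝ (Pext p (j - 1) - q (j - 1) + σ))
  rw [div_mul_eq_mul_div, mul_left_comm, hV, mul_pow _ I]
  field_simp

/-- Barnes-type self-reproducing identity for `U_{n,a}`
(Proposition 1.8(1) of Ishii–Stade). -/
theorem U_barnes_identity_one (n : ℕ) (hn : 2 ≤ n) (a : ℕ → ℂ)
    (ha : ∀ j < n, (a j).re = 0) (σ : ℂ) (hσ : 0 < σ.re)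
    (p : ℕ → ℂ) (hp : ∀ j < n - 1, 0 < (p j).re)
    (c : ℕ → ℝ) (hc : ∀ i < n - 1, 0 < c i)
    (hΓ : ∀ j, 1 ≤ j → j ≤ n - 1 →
      0 < (Pext p j - (c (j - 1) : ℂ)).re ∧
      0 < (Pext p (j - 1) - (c (j - 1) : ℂ) + σ).re) :
    Ufun n a p =
      GammaR (p (n - 2) + σ + sumA n a) / (∏ j ∈ Finset.range n, GammaR (σ + a j)) *
        (((4 * (Real.pi : ℂ) * Complex.I) ^ (n - 1))⁻¹ *
          VIntK (n - 1) c (fun q =>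
            Ufun n a q *
              ∏ j ∈ Finset.Icc 1 (n - 1),
                GammaR (Pext p j - q (j - 1)) *
                  GammaR (Pext p (j - 1) - q (j - 1) + σ))) :=
  U_barnes_identity_one_general n hn a (fun j hj => (ha j hj).ge) σ p c hc hΓ

end
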